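/- Every strongly edge decomposable simplicial complex is Cohen–Macaulay and has the strong Lefschetz property over any infinite field K (of arbitrary characteristic). -/

import Mathlib

/-! Combinatorics of simplicial complexes on subsets of ℕ (vertex set `[n] = Finset.Icc 1 n`). -/

/-- `Γ` is a simplicial complex on the vertex set `V`. -/
def SimplicialComplexOn (V : Finset ℕ) (Γ : Set (Finset ℕ)) : Prop :=
  (∀ F ∈ Γ, F ⊆ V) ∧ (∀ v ∈ V, ({v} : Finset ℕ) ∈ Γ) ∧
    (∀ F ∈ Γ, ∀ G, G ⊆ F → G ∈ Γ)

/-- The dimension of a simplicial complex, as an integer (`dim Γ = max {|F| - 1 : F ∈ Γ}`). -/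
noncomputable def sdim (Γ : Set (Finset ℕ)) : ℤ :=
  sSup ((fun F : Finset ℕ => (F.card : ℤ) - 1) '' Γ)

/-- A facet of `Γ` is a maximal face. -/
def IsFacet (Γ : Set (Finset ℕ)) (F : Finset ℕ) : Prop :=
  F ∈ Γ ∧ ∀ G ∈ Γ, F ⊆ G → F = G

/-- A complex is pure if all of its facets have the same cardinality. -/
def PureComplex (Γ : Set (Finset ℕ)) : Prop :=
  ∀ F G, IsFacet Γ F → IsFacet Γ G → F.card = G.card

/-- `fvec Γ k` is the number of faces of `Γ` of cardinality `k`, i.e. `f_{k-1}(Γ)`. -/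
noncomputable def fvec (Γ : Set (Finset ℕ)) (k : ℕ) : ℕ :=
  {F ∈ Γ | F.card = k}.ncard

/-- The `h`-vector of a `(d-1)`-dimensional complex:
`h_i = ∑_{j=0}^i (-1)^{i-j} binom(d-j, d-i) f_{j-1}`. -/
noncomputable def hvec (d : ℕ) (Γ : Set (Finset ℕ)) (i : ℕ) : ℤ :=
  ∑ j ∈ Finset.range (i + 1),
    (-1 : ℤ) ^ (i - j) * (Nat.choose (d - j) (d - i) : ℤ) * (fvec Γ j : ℤ)

/-- The link of `Γ` with respect to a face `F`. -/
def linkOf (Γ : Set (Finset ℕ)) (F : Finset ℕ) : Set (Finset ℕ) :=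
  {G | Disjoint G F ∧ G ∪ F ∈ Γ}

/-- The contraction of `Γ` with respect to `{i,j}`, identifying vertex `i` with `j`. -/
def contraction (Γ : Set (Finset ℕ)) (i j : ℕ) : Set (Finset ℕ) :=
  {F | F ∈ Γ ∧ i ∉ F} ∪ {G | ∃ F ∈ Γ, i ∈ F ∧ G = F.erase i ∪ {j}}

/-- The Link condition: `lk_Γ({i}) ∩ lk_Γ({j}) = lk_Γ({i,j})`. -/
def LinkCondition (Γ : Set (Finset ℕ)) (i j : ℕ) : Prop :=
  linkOf Γ {i} ∩ linkOf Γ {j} = linkOf Γ {i, j}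

open Classical in
/-- The shift operator `C_{ij}` on faces. -/
noncomputable def shiftMap (Γ : Set (Finset ℕ)) (i j : ℕ) (F : Finset ℕ) : Finset ℕ :=
  if i ∈ F ∧ j ∉ F ∧ F.erase i ∪ {j} ∉ Γ then F.erase i ∪ {j} else F

/-- `Shift_{ij}(Γ) = {C_{ij}(F) : F ∈ Γ}`. -/
noncomputable def shiftComplex (Γ : Set (Finset ℕ)) (i j : ℕ) : Set (Finset ℕ) :=
  (shiftMap Γ i j) '' Γ

/-- The join `W * Σ = {F ∪ G : F ⊆ W, G ∈ Σ}` of a vertex set with a complex. -/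
def joinW (W : Finset ℕ) (C : Set (Finset ℕ)) : Set (Finset ℕ) :=
  {H | ∃ F ⊆ W, ∃ G ∈ C, H = F ∪ G}

/-- Strong edge decomposability: boundaries of simplices and `{∅}` are strongly edge
decomposable, and recursively, a pure complex satisfying the Link condition w.r.t. an edge
`{i,j}` whose contraction and link are strongly edge decomposable is
strongly edge decomposable. -/
inductive StronglyEdgeDecomposable : Set (Finset ℕ) → Prop
  | trivialComplex : StronglyEdgeDecomposable {(∅ : Finset ℕ)}
  | simplexBoundary (V : Finset ℕ) (hV : V.Nonempty) :
      StronglyEdgeDecomposable {F | F ⊆ V ∧ F ≠ V}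
  | contract (Γ : Set (Finset ℕ)) (i j : ℕ) (hij : i < j)
      (hpure : PureComplex Γ) (hedge : ({i, j} : Finset ℕ) ∈ Γ)
      (hlc : LinkCondition Γ i j)
      (hcon : StronglyEdgeDecomposable (contraction Γ i j))
      (hlk : StronglyEdgeDecomposable (linkOf Γ {i, j})) :
      StronglyEdgeDecomposable Γ

/-- A shifted complex: `F ∈ Γ`, `i ∈ F`, `i < j`, `j ∈ V` imply `(F \ {i}) ∪ {j} ∈ Γ`. -/
def ShiftedComplex (V : Finset ℕ) (Γ : Set (Finset ℕ)) : Prop :=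
  ∀ F ∈ Γ, ∀ i ∈ F, ∀ j, i < j → j ∈ V → insert j (F.erase i) ∈ Γ

/-- A `d`-subset `F ⊆ [n]` is admissible if `n - k ∉ F` implies `[n-d+k, n-k-1] ⊆ F`. -/
def Admissible (n d : ℕ) (F : Finset ℕ) : Prop :=
  F ⊆ Finset.Icc 1 n ∧ F.card = d ∧
    ∀ k < n, (n - k) ∉ F → Finset.Icc (n - d + k) (n - k - 1) ⊆ F

/-- `Δ(n,d)`, the complex generated by all admissible `d`-subsets of `[n]`; by a theorem of
Kalai this is the symmetric algebraic shifted complex `Δˢ(C(n,d))` of the boundary complex of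
the cyclic `d`-polytope with `n` vertices. -/
def DeltaC (n d : ℕ) : Set (Finset ℕ) :=
  if d = 0 then {(∅ : Finset ℕ)} else {G | ∃ F, Admissible n d F ∧ G ⊆ F}

/-- The increasing enumeration of `V`, as a map `{1, …, |V|} → V ⊆ ℕ` (identity elsewhere). -/
noncomputable def vlabel (V : Finset ℕ) (i : ℕ) : ℕ :=
  if h : i - 1 < V.card then (((V.orderIsoOfFin rfl) ⟨i - 1, h⟩ : V) : ℕ) else i

/-- `Δ(V,d)`: the complex `Δ(|V|,d)` relabeled order-isomorphically onto the vertex set `V`. -/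
noncomputable def DeltaV (V : Finset ℕ) (d : ℕ) : Set (Finset ℕ) :=
  (fun G : Finset ℕ => G.image (vlabel V)) '' DeltaC V.card d
/-! Squeezed balls and spheres (Kalai). Monomials on `[m]` are represented as multisets. -/

/-- `U` is a shifted order ideal of monomials on `[m]`: it contains `1` and all variables
`x_1,…,x_m`, is closed under divisibility, and `u·x_i ∈ U`, `i < j ≤ m` imply `u·x_j ∈ U`.
(A monomial is encoded as the multiset of its variable indices.) -/
def IsShiftedOrderIdeal (m : ℕ) (U : Set (Multiset ℕ)) : Prop :=
  (∀ u ∈ U, ∀ i ∈ u, i ∈ Finset.Icc 1 m) ∧ (0 : Multiset ℕ) ∈ U ∧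
    (∀ i ∈ Finset.Icc 1 m, ({i} : Multiset ℕ) ∈ U) ∧
    (∀ u ∈ U, ∀ v, v ≤ u → v ∈ U) ∧
    (∀ u : Multiset ℕ, ∀ i j : ℕ, i < j → j ≤ m → (i ::ₘ u) ∈ U → (j ::ₘ u) ∈ U)

/-- For a monomial `u = x_{i_1}⋯x_{i_k}` (`i_1 ≤ … ≤ i_k`), the `(d+1)`-set
`F_d(u) = {i_1, i_1+1} ∪ {i_2+2, i_2+3} ∪ ⋯ ∪ {i_k+2(k-1), i_k+2k-1} ∪ [n+2k-d, n]`. -/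
noncomputable def Fd (n d : ℕ) (u : Multiset ℕ) : Finset ℕ :=
  (Finset.range (Multiset.card u)).biUnion
      (fun j => {(u.sort (· ≤ ·)).getD j 0 + 2 * j, (u.sort (· ≤ ·)).getD j 0 + 2 * j + 1}) ∪
    Finset.Icc (n + 2 * Multiset.card u - d) n

/-- The squeezed `d`-ball `B_d(U)`: the complex generated by `{F_d(u) : u ∈ U}`. -/
def squeezedBall (n d : ℕ) (U : Set (Multiset ℕ)) : Set (Finset ℕ) :=
  {G | ∃ u ∈ U, G ⊆ Fd n d u}

/-- The boundary of a pure `d`-dimensional complex `B`: the subcomplex generated by the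
`(d-1)`-dimensional faces (cardinality-`d` faces) contained in exactly one facet. -/
noncomputable def complexBoundary (d : ℕ) (B : Set (Finset ℕ)) : Set (Finset ℕ) :=
  {F | ∃ G, F ⊆ G ∧ G ∈ B ∧ G.card = d ∧
    {H | H ∈ B ∧ H.card = d + 1 ∧ G ⊆ H}.ncard = 1}

/-- The squeezed `(d-1)`-sphere `S_d(U) = ∂ B_d(U)`. -/
noncomputable def squeezedSphere (n d : ℕ) (U : Set (Multiset ℕ)) : Set (Finset ℕ) :=
  complexBoundary d (squeezedBall n d U)

/-! The Stanley–Reisner ideal, the degree reverse lexicographic order, initial ideals and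
generic initial ideals in the polynomial ring `K[x_1,…,x_n]`, realized as
`MvPolynomial (Fin n) K` with the variable `x_i` being `X ⟨i-1⟩`. -/

/-- The squarefree monomial `x_F = ∏_{i ∈ F} x_i` (variable `x_i`, `1 ≤ i ≤ n`, is `X ⟨i-1⟩`). -/
noncomputable def faceMonomial (K : Type*) [CommRing K] (n : ℕ) (F : Finset ℕ) :
    MvPolynomial (Fin n) K :=
  ∏ a ∈ Finset.univ.filter (fun a : Fin n => (a : ℕ) + 1 ∈ F), MvPolynomial.X a

/-- The Stanley–Reisner ideal of a complex `Γ` on `[n]`, generated by the squarefree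
monomials `x_F` with `F ⊆ [n]`, `F ∉ Γ`. -/
noncomputable def srIdeal (K : Type*) [CommRing K] (n : ℕ) (Γ : Set (Finset ℕ)) :
    Ideal (MvPolynomial (Fin n) K) :=
  Ideal.span {f | ∃ F : Finset ℕ, F ⊆ Finset.Icc 1 n ∧ F ∉ Γ ∧ f = faceMonomial K n F}

/-- The degree reverse lexicographic order (induced by `x_1 > x_2 > ⋯`, smaller index =
bigger variable): `u < v` iff `deg u < deg v`, or degrees agree and at the largest index
where `u, v` differ, `u` has the larger exponent. -/
def DegRevLexLT {σ : Type*} [LinearOrder σ] (u v : σ →₀ ℕ) : Prop :=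
  (u.sum fun _ e => e) < (v.sum fun _ e => e) ∨
    ((u.sum fun _ e => e) = (v.sum fun _ e => e) ∧
      ∃ k, v k < u k ∧ ∀ l, k < l → u l = v l)

/-- The initial ideal of `I` w.r.t. the degree reverse lexicographic order: the ideal
spanned by the leading monomials of the elements of `I`. -/
noncomputable def initialIdeal {σ : Type*} [LinearOrder σ] {K : Type*} [Field K]
    (I : Ideal (MvPolynomial σ K)) : Ideal (MvPolynomial σ K) :=
  Ideal.span {m | ∃ f ∈ I, ∃ u ∈ f.support, m = MvPolynomial.monomial u (1 : K) ∧
    ∀ v ∈ f.support, v ≠ u → DegRevLexLT v u}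

/-- The linear change of coordinates of `K[x_1,…,x_n]` associated with a matrix `M`,
`x_j ↦ ∑_i M_{ij} x_i`. -/
noncomputable def genLin {K : Type*} [CommRing K] {n : ℕ} (M : Matrix (Fin n) (Fin n) K) :
    MvPolynomial (Fin n) K →ₐ[K] MvPolynomial (Fin n) K :=
  MvPolynomial.aeval (fun j => ∑ a : Fin n, MvPolynomial.C (M a j) * MvPolynomial.X a)

/-- `J` is the generic initial ideal (w.r.t. degrevlex) of `I`: there is a nonempty Zariski
open subset `U ⊆ GL_n(K)` (the nonvanishing locus of a nonzero polynomial in the matrix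
entries) such that `in(φ(I)) = J` for every `φ ∈ U`. -/
def IsGin {K : Type*} [Field K] {n : ℕ} (I J : Ideal (MvPolynomial (Fin n) K)) : Prop :=
  ∃ p : MvPolynomial (Fin n × Fin n) K, p ≠ 0 ∧
    ∀ M : Matrix (Fin n) (Fin n) K, IsUnit M.det →
      MvPolynomial.eval (fun q => M q.1 q.2) p ≠ 0 →
      initialIdeal (Ideal.map (genLin M) I) = J

/-- The set `G(J)` of (exponent vectors of) minimal monomial generators of a monomial
ideal `J`. -/
def minimalMonomialGens {σ : Type*} {K : Type*} [Field K] (J : Ideal (MvPolynomial σ K)) :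
    Set (σ →₀ ℕ) :=
  {u | MvPolynomial.monomial u (1 : K) ∈ J ∧
    ∀ v : σ →₀ ℕ, v ≤ u → MvPolynomial.monomial v (1 : K) ∈ J → v = u}

/-- The squarefree operation `Φ` on exponent vectors:
`x_{i_1} x_{i_2} ⋯ x_{i_k} ↦ {i_1, i_2+1, …, i_k+k-1}` (`i_1 ≤ i_2 ≤ ⋯ ≤ i_k`). -/
noncomputable def sqfreeOp {n : ℕ} (u : Fin n →₀ ℕ) : Finset ℕ :=
  (List.zipWith (· + ·)
      ((u.toMultiset.map (fun a : Fin n => (a : ℕ) + 1)).sort (· ≤ ·))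
      (List.range (Multiset.card (u.toMultiset)))).toFinset

/-- `Δs` is the symmetric algebraic shifted complex of `Γ`: its Stanley–Reisner ideal is
`Φ(Gin(I_Γ))`, i.e. `Δs` consists of the `F ⊆ [n]` containing no `Φ(u)`, `u ∈ G(Gin(I_Γ))`. -/
def IsSymmetricShift (K : Type*) [Field K] (n : ℕ) (Γ Δs : Set (Finset ℕ)) : Prop :=
  ∃ J : Ideal (MvPolynomial (Fin n) K), IsGin (srIdeal K n Γ) J ∧
    Δs = {F | F ⊆ Finset.Icc 1 n ∧ ∀ u ∈ minimalMonomialGens J, ¬ sqfreeOp u ⊆ F}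

/-- The exponent vector (in `K[x_1,…,x_n]`) of a monomial given as a multiset. -/
noncomputable def multisetToExp (n : ℕ) (u : Multiset ℕ) : Fin n →₀ ℕ :=
  Finsupp.equivFunOnFinite.symm (fun a : Fin n => u.count ((a : ℕ) + 1))
/-! The exterior algebra `E = ⋀⟨e_1, e_2, …⟩` over `K`, exterior face ideals, the reverse
lexicographic order, initial ideals and exterior algebraic shifting. We realize `E` as the
exterior algebra of the `K`-module `ℕ → K`, with `e_i` the image of `Pi.single i 1`. -/

/-- The exterior algebra `⋀ (ℕ → K)` hosting all the exterior face ideals. -/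
abbrev ExtAlg (K : Type*) [Field K] := ExteriorAlgebra K (ℕ → K)

/-- The exterior monomial `e_F = e_{i_1} ∧ ⋯ ∧ e_{i_k}` for `F = {i_1 < ⋯ < i_k}`. -/
noncomputable def eMon (K : Type*) [Field K] (F : Finset ℕ) : ExtAlg K :=
  ((F.sort (· ≤ ·)).map (fun i => ExteriorAlgebra.ι K (Pi.single i (1 : K)))).prod

/-- The exterior face ideal `J_Γ` of a complex `Γ` on the vertex set `V`, generated by the
monomials `e_F` with `F ⊆ V`, `F ∉ Γ`. -/
noncomputable def extFaceIdeal (K : Type*) [Field K] (V : Finset ℕ) (Γ : Set (Finset ℕ)) :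
    Ideal (ExtAlg K) :=
  Ideal.span {x | ∃ F : Finset ℕ, F ⊆ V ∧ F ∉ Γ ∧ x = eMon K F}

/-- The alternating form computing the determinant of the coordinates indexed by `F`. -/
noncomputable def detCoeffAlt (K : Type*) [Field K] (F : Finset ℕ) :
    (ℕ → K) [⋀^Fin F.card]→ₗ[K] K :=
  (Matrix.detRowAlternating).compLinearMap
    (LinearMap.funLeft K K (fun b : Fin F.card => ((F.orderIsoOfFin rfl b : F) : ℕ)))

/-- The coefficient functional of the basis monomial `e_F`: the linear functional on the
exterior algebra giving the coefficient of `e_F` in the monomial basis expansion. -/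
noncomputable def extCoeff (K : Type*) [Field K] (F : Finset ℕ) : ExtAlg K →ₗ[K] K :=
  ExteriorAlgebra.liftAlternating
    (fun i => if h : i = F.card then (detCoeffAlt K F).domDomCongr (finCongr h.symm) else 0)

/-- The reverse lexicographic order (induced by `1 > 2 > ⋯`) on exterior monomials:
`F < G` iff `|F| < |G|`, or the cardinalities agree and the largest element of the
symmetric difference `F Δ G` belongs to `F`. -/
def RevLexLT (F G : Finset ℕ) : Prop :=
  F.card < G.card ∨ (F.card = G.card ∧
    ∃ k, k ∈ F ∧ k ∉ G ∧ ∀ l, k < l → (l ∈ F ↔ l ∈ G))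

/-- The initial ideal of an ideal `I` of the exterior algebra w.r.t. the reverse
lexicographic order: spanned by the leading monomials `e_F` of the elements of `I`. -/
noncomputable def extInitialIdeal (K : Type*) [Field K] (I : Ideal (ExtAlg K)) :
    Ideal (ExtAlg K) :=
  Ideal.span {x | ∃ y ∈ I, ∃ F : Finset ℕ, x = eMon K F ∧ extCoeff K F y ≠ 0 ∧
    ∀ G : Finset ℕ, extCoeff K G y ≠ 0 → G ≠ F → RevLexLT G F}

/-- The linear change of coordinates of `span{e_i : i ∈ V}` (identity elsewhere)
associated with a `|V| × |V|` matrix `M`. -/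
noncomputable def extLinMap (K : Type*) [Field K] (V : Finset ℕ)
    (M : Matrix (Fin V.card) (Fin V.card) K) : (ℕ → K) →ₗ[K] (ℕ → K) where
  toFun v k :=
    if h : k ∈ V then
      ∑ a : Fin V.card,
        M ((V.orderIsoOfFin rfl).symm ⟨k, h⟩) a * v ((V.orderIsoOfFin rfl a : V) : ℕ)
    else v k
  map_add' x y := by
    funext k
    by_cases h : k ∈ V <;> simp [h, mul_add, Finset.sum_add_distrib]
  map_smul' c x := by
    funext k
    by_cases h : k ∈ V <;> simp [h, Finset.mul_sum, mul_left_comm]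

/-- The algebra automorphism of the exterior algebra induced by `extLinMap`. -/
noncomputable def extAlgMap (K : Type*) [Field K] (V : Finset ℕ)
    (M : Matrix (Fin V.card) (Fin V.card) K) : ExtAlg K →ₐ[K] ExtAlg K :=
  ExteriorAlgebra.lift K ⟨(ExteriorAlgebra.ι K).comp (extLinMap K V M),
    fun _ => ExteriorAlgebra.ι_sq_zero _⟩

/-- `Δe` is the exterior algebraic shifted complex of `Γ` (as complexes on the vertex set
`V`): `J_{Δe} = Gin(J_Γ)`, where the generic initial ideal is witnessed by a nonempty
Zariski open subset of `GL(V)` (the nonvanishing locus of a nonzero polynomial in the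
matrix entries). -/
def IsExteriorShift (K : Type*) [Field K] (V : Finset ℕ) (Γ Δe : Set (Finset ℕ)) : Prop :=
  ∃ p : MvPolynomial (Fin V.card × Fin V.card) K, p ≠ 0 ∧
    ∀ M : Matrix (Fin V.card) (Fin V.card) K, IsUnit M.det →
      MvPolynomial.eval (fun q => M q.1 q.2) p ≠ 0 →
      extInitialIdeal K (Ideal.map (extAlgMap K V M) (extFaceIdeal K V Γ)) =
        extFaceIdeal K V Δe

/-- The simplicial complex on `V` whose exterior face ideal is the (monomial) ideal `J`. -/
noncomputable def complexOfExtIdeal (K : Type*) [Field K] (V : Finset ℕ)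
    (J : Ideal (ExtAlg K)) : Set (Finset ℕ) :=
  {F | F ⊆ V ∧ eMon K F ∉ J}

/-- Nongeneric exterior shifting `Δ_φ(Γ)`, defined by `J_{Δ_φ(Γ)} = in(φ(J_Γ))` for an
individual linear change of coordinates `φ` given by the matrix `M`. -/
noncomputable def DeltaPhi (K : Type*) [Field K] (V : Finset ℕ)
    (M : Matrix (Fin V.card) (Fin V.card) K) (Γ : Set (Finset ℕ)) : Set (Finset ℕ) :=
  complexOfExtIdeal K V (extInitialIdeal K (Ideal.map (extAlgMap K V M) (extFaceIdeal K V Γ)))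

/-- The shifting-theoretic upper bound relation for a `(d-1)`-dimensional complex `Γ` on the
vertex set `V`: `Δᵉ(Γ) ⊆ Δ(V,d)`. -/
def ShiftingUBR (K : Type*) [Field K] (V : Finset ℕ) (d : ℕ) (Γ : Set (Finset ℕ)) : Prop :=
  ∀ Δe, IsExteriorShift K V Γ Δe → Δe ⊆ DeltaV V d
/-! Graded pieces, linear systems of parameters, the Cohen–Macaulay property and the strong
Lefschetz property for graded quotients `A = K[x_1,…,x_n]/I`. -/

/-- The degree-`k` homogeneous component of the graded quotient `S/I` (the image of the
degree-`k` homogeneous polynomials). -/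
noncomputable def quotPiece {K : Type*} [Field K] {n : ℕ}
    (I : Ideal (MvPolynomial (Fin n) K)) (k : ℕ) :
    Submodule K (MvPolynomial (Fin n) K ⧸ I) :=
  (MvPolynomial.homogeneousSubmodule (Fin n) K k).map (Ideal.Quotient.mkₐ K I).toLinearMap

/-- `θ_1, …, θ_d` is a linear system of parameters of `S/I`: the `θ_a` are linear forms and
the quotient `S/(I + (θ_1,…,θ_d))` has Krull dimension `≤ 0`. -/
def IsLSOP {K : Type*} [Field K] {n : ℕ} (I : Ideal (MvPolynomial (Fin n) K)) (d : ℕ)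
    (θ : Fin d → MvPolynomial (Fin n) K) : Prop :=
  (∀ a, (θ a).IsHomogeneous 1) ∧
    ringKrullDim (MvPolynomial (Fin n) K ⧸ (I ⊔ Ideal.span (Set.range θ))) ≤ 0

set_option synthInstance.maxHeartbeats 1000000 in
/-- The graded quotient `A = S/I` is Cohen–Macaulay: a linear system of parameters of
length `d = dim A` forms a regular `A`-sequence. -/
def IsCMIdeal {K : Type*} [Field K] {n : ℕ} (I : Ideal (MvPolynomial (Fin n) K)) : Prop :=
  ∃ d : ℕ, ringKrullDim (MvPolynomial (Fin n) K ⧸ I) = d ∧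
    ∃ θ : Fin d → MvPolynomial (Fin n) K, IsLSOP I d θ ∧
      RingTheory.Sequence.IsRegular (MvPolynomial (Fin n) K ⧸ I)
        ((List.ofFn θ).map (⇑(Ideal.Quotient.mk I)))

/-- The graded quotient `A = S/I` has the strong Lefschetz property: `A` is Cohen–Macaulay
and there are an l.s.o.p. `θ_1, …, θ_d` (`d = dim A`) and a linear form `ω` such that
`ω^{s-2i} : (A/θA)_i → (A/θA)_{s-i}` is bijective for `0 ≤ i ≤ s/2`, where
`s = max{k : (A/θA)_k ≠ 0}`. -/
def HasSLPIdeal {K : Type*} [Field K] {n : ℕ} (I : Ideal (MvPolynomial (Fin n) K)) : Prop :=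
  IsCMIdeal I ∧
    ∃ d : ℕ, ringKrullDim (MvPolynomial (Fin n) K ⧸ I) = d ∧
      ∃ θ : Fin d → MvPolynomial (Fin n) K, IsLSOP I d θ ∧
        ∃ ω : MvPolynomial (Fin n) K, ω.IsHomogeneous 1 ∧
          ∃ s : ℕ,
            (quotPiece (I ⊔ Ideal.span (Set.range θ)) s ≠ ⊥ ∧
              ∀ k, s < k → quotPiece (I ⊔ Ideal.span (Set.range θ)) k = ⊥) ∧
            ∀ i : ℕ, 2 * i ≤ s →
              Set.BijOn
                (fun x => (Ideal.Quotient.mk (I ⊔ Ideal.span (Set.range θ)) ω) ^ (s - 2 * i) * x)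
                (quotPiece (I ⊔ Ideal.span (Set.range θ)) i)
                (quotPiece (I ⊔ Ideal.span (Set.range θ)) (s - i))

/-- A simplicial complex is Cohen–Macaulay over `K` if its Stanley–Reisner ring is. -/
def ComplexCM (K : Type*) [Field K] (n : ℕ) (Γ : Set (Finset ℕ)) : Prop :=
  IsCMIdeal (srIdeal K n Γ)

/-- A `(d-1)`-dimensional complex `Γ` has the strong Lefschetz property if `h_d(Γ) > 0` and
its Stanley–Reisner ring has the strong Lefschetz property. -/
def ComplexSLP (K : Type*) [Field K] (n d : ℕ) (Γ : Set (Finset ℕ)) : Prop :=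
  0 < hvec d Γ d ∧ HasSLPIdeal (srIdeal K n Γ)

/-- A `1`-dimensional simplicial sphere (a cycle): a complex all of whose faces are edges or
smaller, every vertex lying in exactly two edges, whose edge graph is connected. -/
def IsCycleComplex (V : Finset ℕ) (Γ : Set (Finset ℕ)) : Prop :=
  SimplicialComplexOn V Γ ∧ (∀ F ∈ Γ, F.card ≤ 2) ∧
    (∀ v ∈ V, {e | e ∈ Γ ∧ e.card = 2 ∧ v ∈ e}.ncard = 2) ∧
    ∀ u ∈ V, ∀ v ∈ V,
      Relation.ReflTransGen (fun a b : ℕ => ({a, b} : Finset ℕ) ∈ Γ) u v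

/-! Let `Δ` be the contraction of `Γ` along the edge `{i, j}` and `L` the link of the edge. The
Stanley–Reisner ideal of `Γ` belongs to a family of ideals in which `x_i` is replaced by
`t x_j - x_i`. For `t ≠ 0` a linear change of coordinates brings the members of the family into
`I_Γ`, while by the Link condition the member at `t = 0` contains `I_Δ` modulo `x_i`, and its colon
ideal by `x_i` contains the ideal of the cone over `L`. Over an infinite field,
semicontinuity in `t` bounds the Hilbert function of `K[Γ] / (θ)`, for suitable linear forms `θ`,
by `h(Δ)` plus the shift of `h(L)`, and yields the surjectivity of the Lefschetz maps of `Γ` from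
that for `Δ` and `L`. Counting faces shows that this bound is the `h`-vector of `Γ`, so equality
holds: `θ` is a regular sequence and `Γ` is Cohen–Macaulay. As the `h`-vector is symmetric, the
surjective Lefschetz maps are bijective. That contraction preserves the Euler characteristic
ensures that it does not lower the dimension, and that `h_d(Γ) = 1`. -/

namespace EdgeContraction

open MvPolynomial

attribute [local instance] MvPolynomial.gradedAlgebra

/-! ### Partial sums of sequences -/

/-- The sequence of partial sums of a sequence; on generating functions, the multiplication by
`1 / (1 - t)`. -/
def partialSums : (ℕ → ℕ) →+ (ℕ → ℕ) where
  toFun f k := ∑ j ∈ Finset.range (k + 1), f j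
  map_zero' := by ext; simp
  map_add' f g := by ext; simp [Finset.sum_add_distrib]

/-- The sequence delayed by one step; on generating functions, the multiplication by `t`. -/
def delay : (ℕ → ℕ) →+ (ℕ → ℕ) where
  toFun f k := k.casesOn 0 f
  map_zero' := by ext (_ | _) <;> rfl
  map_add' f g := by ext (_ | _) <;> rfl

@[simp] lemma delay_zero (f : ℕ → ℕ) : delay f 0 = 0 := rfl

@[simp] lemma delay_succ (f : ℕ → ℕ) (k : ℕ) : delay f (k + 1) = f k := rfl

lemma partialSums_zero (f : ℕ → ℕ) : partialSums f 0 = f 0 := by simp [partialSums]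

lemma partialSums_succ (f : ℕ → ℕ) (k : ℕ) :
    partialSums f (k + 1) = partialSums f k + f (k + 1) := Finset.sum_range_succ _ _

lemma add_delay_partialSums (f : ℕ → ℕ) : f + delay (partialSums f) = partialSums f := by
  ext (_ | k)
  · simp [partialSums_zero]
  · simp [partialSums_succ, add_comm]

lemma partialSums_commute_delay : Function.Commute partialSums delay := by
  intro f
  ext (_ | k)
  · simp [partialSums]
  · simp [partialSums, Finset.sum_range_succ' _ (k + 1)]

lemma monotone_partialSums : Monotone partialSums :=
  fun _ _ h k => Finset.sum_le_sum (s := Finset.range (k + 1)) fun j _ => h j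

lemma monotone_delay : Monotone delay := by
  rintro f g h (_ | k)
  · exact le_rfl
  · exact h k

lemma partialSums_injective : Function.Injective partialSums := by
  intro f g h
  ext (_ | k)
  · simpa only [partialSums_zero] using congrFun h 0
  · have hk := congrFun h (k + 1)
    rw [partialSums_succ, partialSums_succ, congrFun h k] at hk
    exact Nat.add_left_cancel hk

lemma le_partialSums_of_le_add_delay {f g : ℕ → ℕ} (h : f ≤ g + delay f) :
    f ≤ partialSums g := by
  intro k
  induction k with
  | zero => simpa [partialSums_zero] using h 0
  | succ k ih =>
    rw [partialSums_succ, add_comm (partialSums g k)]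
    exact (h (k + 1)).trans (Nat.add_le_add_left ih _)

/-! ### Semicontinuity of ranks in polynomial families -/

section Semicontinuity

open Filter

variable {K S : Type*} [Field K]

lemma eventually_eval_ne_zero {p : Polynomial K} (hp : p ≠ 0) :
    ∀ᶠ t in cofinite, p.eval t ≠ 0 := by
  simpa only [eventually_cofinite, not_not] using! Polynomial.finite_setOfPred_isRoot hp

variable [CommRing S] [Algebra K S]

lemma exists_polynomial_eval_eq (l : S →ₗ[K] K) (p : Polynomial S) :
    ∃ q : Polynomial K, ∀ t, q.eval t = l (p.eval (algebraMap K S t)) := by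
  refine ⟨p.sum fun i s => Polynomial.monomial i (l s), fun t => ?_⟩
  simp only [Polynomial.eval_eq_sum (p := p), Polynomial.sum_def, Polynomial.eval_finsetSum,
    map_sum, Polynomial.eval_monomial, ← map_pow]
  refine Finset.sum_congr rfl fun i _ => ?_
  rw [mul_comm (p.coeff i), ← Algebra.smul_def, map_smul, smul_eq_mul, mul_comm]

/-- The Gram-type determinant of the family against functionals dual to it at `t₀` is a polynomial
in `t` with value `1` at `t₀`. -/
lemma eventually_linearIndependent_eval {κ : Type*} [Finite κ] (c : κ → Polynomial S) {t₀ : K}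
    (h : LinearIndependent K fun x => (c x).eval (algebraMap K S t₀)) :
    ∀ᶠ t in cofinite, LinearIndependent K fun x => (c x).eval (algebraMap K S t) := by
  classical
  have := Fintype.ofFinite κ
  obtain ⟨g, hg⟩ := LinearMap.exists_leftInverse_of_injective
    (Fintype.linearCombination K fun x => (c x).eval (algebraMap K S t₀))
    (LinearMap.ker_eq_bot.2 h.fintypeLinearCombination_injective)
  choose q hq using fun x y => exists_polynomial_eval_eq (LinearMap.proj y ∘ₗ g) (c x)
  have eval_det (t : K) : (Matrix.of q).det.eval t =
      (Matrix.of fun x => g ((c x).eval (algebraMap K S t))).det := by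
    rw [← Polynomial.coe_evalRingHom, RingHom.map_det]
    congr 1
    ext x y
    simp [hq]
  have dual : (Matrix.of fun x => g ((c x).eval (algebraMap K S t₀))) = 1 := by
    ext x y
    have hx := LinearMap.congr_fun hg (Pi.single x 1)
    rw [LinearMap.comp_apply, Fintype.linearCombination_apply_single, one_smul] at hx
    rw [Matrix.of_apply, hx, LinearMap.id_apply, Matrix.one_eq_pi_single]
  have det_ne_zero : (Matrix.of q).det ≠ 0 := by
    rintro h0
    simpa [h0, dual] using eval_det t₀
  filter_upwards [eventually_eval_ne_zero det_ne_zero] with t ht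
  rw [eval_det] at ht
  exact LinearIndependent.of_comp g (Matrix.linearIndependent_rows_of_det_ne_zero ht)

lemma eventually_finrank_span_eval_le {ι : Type*} (W : Submodule K S) [FiniteDimensional K W]
    (c : ι → Polynomial S) (hc : ∀ i t, (c i).eval (algebraMap K S t) ∈ W) (t₀ : K) :
    ∀ᶠ t in cofinite,
      Module.finrank K (Submodule.span K (Set.range fun i => (c i).eval (algebraMap K S t₀))) ≤
        Module.finrank K (Submodule.span K (Set.range fun i => (c i).eval (algebraMap K S t))) := by
  obtain ⟨κ, a, -, hspan, hli⟩ :=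
    exists_linearIndependent' K fun i => (c i).eval (algebraMap K S t₀)
  have : Finite κ :=
    (LinearIndependent.of_comp W.subtype (v := fun x => (⟨_, hc (a x) t₀⟩ : W)) hli).finite
  have := Fintype.ofFinite κ
  filter_upwards [eventually_linearIndependent_eval (c ∘ a) hli] with t ht
  rw [← hspan, finrank_span_eq_card hli, ← finrank_span_eq_card ht]
  have hW : Submodule.span K (Set.range fun i => (c i).eval (algebraMap K S t)) ≤ W :=
    Submodule.span_le.2 (Set.range_subset_iff.2 fun i => hc i t)
  have := Submodule.finiteDimensional_of_le hW
  exact Submodule.finrank_mono (Submodule.span_mono (Set.range_subset_iff.2 fun x => ⟨a x, rfl⟩))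

end Semicontinuity

/-! ### Hilbert functions -/

section HilbertFunction

variable {σ K : Type*} [Field K]

lemma finrank_map_add_finrank_inf_ker {V W : Type*} [AddCommGroup V] [Module K V]
    [AddCommGroup W] [Module K W] (f : V →ₗ[K] W) (p : Submodule K V) [FiniteDimensional K p] :
    Module.finrank K (p.map f) + Module.finrank K ↥(p ⊓ LinearMap.ker f) = Module.finrank K p := by
  rw [← LinearMap.finrank_range_add_finrank_ker (f.domRestrict p), LinearMap.range_domRestrict,
    LinearMap.ker_domRestrict, ← Submodule.map_comap_subtype, Submodule.finrank_map_subtype_eq]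

lemma finrank_map_le_finrank_map {V W W' : Type*} [AddCommGroup V] [Module K V]
    [AddCommGroup W] [Module K W] [AddCommGroup W'] [Module K W'] {f : V →ₗ[K] W} {g : V →ₗ[K] W'}
    {p : Submodule K V} [FiniteDimensional K p] (h : p ⊓ LinearMap.ker g ≤ LinearMap.ker f) :
    Module.finrank K (p.map f) ≤ Module.finrank K (p.map g) := by
  have hle : p ⊓ LinearMap.ker g ≤ p ⊓ LinearMap.ker f := le_inf inf_le_left h
  have := Submodule.finiteDimensional_of_le (inf_le_left : p ⊓ LinearMap.ker f ≤ p)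
  have := Submodule.finrank_mono hle
  have := finrank_map_add_finrank_inf_ker f p
  have := finrank_map_add_finrank_inf_ker g p
  omega

lemma homogeneousComponent_mul_of_isHomogeneous {g : MvPolynomial σ K} {e : ℕ}
    (hg : g.IsHomogeneous e) (a : MvPolynomial σ K) (k : ℕ) :
    homogeneousComponent k (a * g) =
      if e ≤ k then homogeneousComponent (k - e) a * g else 0 := by
  simpa only [← decomposition.decompose'_apply] using!
    DirectSum.coe_decompose_mul_of_right_mem (homogeneousSubmodule σ K) k hg

lemma mem_span_homogeneous_multiples {ι : Type*} {g : ι → MvPolynomial σ K} {e : ι → ℕ}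
    (hg : ∀ i, (g i).IsHomogeneous (e i)) {x : MvPolynomial σ K} {k : ℕ}
    (hxk : x.IsHomogeneous k) (hx : x ∈ Ideal.span (Set.range g)) :
    x ∈ Submodule.span K (Set.range
      fun p : {p : MvPolynomial σ K × ι // e p.2 ≤ k ∧ p.1.IsHomogeneous (k - e p.2)} =>
        p.1.1 * g p.1.2) := by
  obtain ⟨c, rfl⟩ := Finsupp.mem_ideal_span_range_iff_exists_finsupp.1 hx
  rw [← homogeneousComponent_eq_self hxk, Finsupp.sum, map_sum]
  refine Submodule.sum_mem _ fun i _ => ?_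
  rw [homogeneousComponent_mul_of_isHomogeneous (hg i)]
  split_ifs with h
  · exact Submodule.subset_span
      ⟨⟨(homogeneousComponent (k - e i) (c i), i), h, homogeneousComponent_isHomogeneous _ _⟩, rfl⟩
  · exact zero_mem _

lemma isHomogeneous_span_singleton {g : MvPolynomial σ K} {e : ℕ} (hg : g.IsHomogeneous e) :
    (Ideal.span {g}).IsHomogeneous (homogeneousSubmodule σ K) :=
  Ideal.homogeneous_span _ _ (by simpa using! ⟨e, hg⟩)

lemma isHomogeneous_span_range {ι : Type*} {θ : ι → MvPolynomial σ K} {e : ℕ}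
    (hθ : ∀ a, (θ a).IsHomogeneous e) :
    (Ideal.span (Set.range θ)).IsHomogeneous (homogeneousSubmodule σ K) :=
  Ideal.homogeneous_span _ _ (Set.forall_mem_range.2 fun a => ⟨e, hθ a⟩)

/-- The degree-`k` piece of the graded quotient of a polynomial ring by the ideal `L`. -/
noncomputable def gradedPiece (L : Ideal (MvPolynomial σ K)) (k : ℕ) :
    Submodule K (MvPolynomial σ K ⧸ L) :=
  (homogeneousSubmodule σ K k).map (Ideal.Quotient.mkₐ K L).toLinearMap

/-- The Hilbert function of the quotient of a polynomial ring by the ideal `L`. -/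
noncomputable def hilbertFunction (L : Ideal (MvPolynomial σ K)) (k : ℕ) : ℕ :=
  Module.finrank K (gradedPiece L k)

lemma ker_mkₐ (L : Ideal (MvPolynomial σ K)) :
    LinearMap.ker (Ideal.Quotient.mkₐ K L).toLinearMap = L.restrictScalars K := by
  ext x
  exact Ideal.Quotient.eq_zero_iff_mem

lemma gradedPiece_eq_bot_iff {L : Ideal (MvPolynomial σ K)} {k : ℕ} :
    gradedPiece L k = ⊥ ↔ homogeneousSubmodule σ K k ≤ L.restrictScalars K := by
  rw [gradedPiece, ← le_bot_iff, Submodule.map_le_iff_le_comap, Submodule.comap_bot, ker_mkₐ]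

lemma homogeneousSubmodule_le_of_le {L : Ideal (MvPolynomial σ K)} {k m : ℕ}
    (h : homogeneousSubmodule σ K k ≤ L.restrictScalars K) (hkm : k ≤ m) :
    homogeneousSubmodule σ K m ≤ L.restrictScalars K := by
  rw [← Nat.sub_add_cancel hkm, ← homogeneousSubmodule_one_pow, pow_add,
    homogeneousSubmodule_one_pow, homogeneousSubmodule_one_pow, Submodule.mul_le]
  exact fun a _ b hb => L.mul_mem_left a (h hb)

variable [Finite σ]

instance (k : ℕ) : FiniteDimensional K (homogeneousSubmodule σ K k) :=
  Module.Finite.iff_fg.2 (homogeneousSubmodule_fg σ K k)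

instance (L : Ideal (MvPolynomial σ K)) (k : ℕ) : FiniteDimensional K (gradedPiece L k) :=
  Module.Finite.map _ _

lemma hilbertFunction_add_finrank_inf (L : Ideal (MvPolynomial σ K)) (k : ℕ) :
    hilbertFunction L k + Module.finrank K ↥(homogeneousSubmodule σ K k ⊓ L.restrictScalars K) =
      Module.finrank K (homogeneousSubmodule σ K k) := by
  rw [← ker_mkₐ]
  exact finrank_map_add_finrank_inf_ker _ _

lemma hilbertFunction_eq_zero_iff {L : Ideal (MvPolynomial σ K)} {k : ℕ} :
    hilbertFunction L k = 0 ↔ homogeneousSubmodule σ K k ≤ L.restrictScalars K := by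
  rw [hilbertFunction, Submodule.finrank_eq_zero, gradedPiece_eq_bot_iff]

lemma hilbertFunction_eq_zero_of_le {L : Ideal (MvPolynomial σ K)} {k m : ℕ}
    (h : hilbertFunction L k = 0) (hkm : k ≤ m) : hilbertFunction L m = 0 :=
  hilbertFunction_eq_zero_iff.2
    (homogeneousSubmodule_le_of_le (hilbertFunction_eq_zero_iff.1 h) hkm)

lemma hilbertFunction_le_of_le_comap {τ : Type*} {L : Ideal (MvPolynomial σ K)}
    {L' : Ideal (MvPolynomial τ K)} (φ : MvPolynomial σ K →ₐ[K] MvPolynomial τ K)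
    (hL : L ≤ L'.comap φ) {k : ℕ}
    (hφ : homogeneousSubmodule τ K k ≤ (homogeneousSubmodule σ K k).map φ.toLinearMap) :
    hilbertFunction L' k ≤ hilbertFunction L k := by
  have hle : gradedPiece L' k ≤ (homogeneousSubmodule σ K k).map
      ((Ideal.Quotient.mkₐ K L').toLinearMap ∘ₗ φ.toLinearMap) := by
    rw [Submodule.map_comp]
    exact Submodule.map_mono hφ
  refine (Submodule.finrank_mono hle).trans (finrank_map_le_finrank_map ?_)
  rw [LinearMap.ker_comp, ker_mkₐ, ker_mkₐ]
  exact inf_le_right.trans hL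

lemma hilbertFunction_anti : Antitone (hilbertFunction : Ideal (MvPolynomial σ K) → ℕ → ℕ) :=
  fun _ _ h _ => hilbertFunction_le_of_le_comap (AlgHom.id K _) h (Submodule.map_id _).ge

end HilbertFunction

section LinearForm

variable {σ K : Type*} [Field K] {L : Ideal (MvPolynomial σ K)} {x : MvPolynomial σ K}

/-- Multiplication by the class of `x` modulo `L`. -/
noncomputable def mulQuot (L : Ideal (MvPolynomial σ K)) (x : MvPolynomial σ K) :
    (MvPolynomial σ K ⧸ L) →ₗ[K] MvPolynomial σ K ⧸ L :=
  LinearMap.mulRight K (Ideal.Quotient.mk L x)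

lemma map_factorₐ_gradedPiece {L L' : Ideal (MvPolynomial σ K)} (h : L ≤ L') (k : ℕ) :
    (gradedPiece L k).map (Ideal.Quotient.factorₐ K h).toLinearMap = gradedPiece L' k := by
  rw [gradedPiece, gradedPiece, ← Submodule.map_comp]
  rfl

lemma exists_sub_mul_mem (hL : L.IsHomogeneous (homogeneousSubmodule σ K)) {e k : ℕ}
    (hx : x.IsHomogeneous e) {y : MvPolynomial σ K} (hy : y.IsHomogeneous (k + e))
    (hyL : y ∈ L ⊔ Ideal.span {x}) : ∃ a, a.IsHomogeneous k ∧ y - a * x ∈ L := by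
  obtain ⟨l, hl, b, hb, rfl⟩ := Submodule.mem_sup.1 hyL
  obtain ⟨a, rfl⟩ := Ideal.mem_span_singleton'.1 hb
  refine ⟨homogeneousComponent k a, homogeneousComponent_isHomogeneous _ _, ?_⟩
  have hcomp := homogeneousComponent_eq_self hy
  rw [map_add, homogeneousComponent_mul_of_isHomogeneous hx, if_pos (Nat.le_add_left e k),
    Nat.add_sub_cancel] at hcomp
  rw [← hcomp, add_sub_cancel_right]
  exact homogeneousComponent_mem_of_mem hL hl _

lemma mem_of_mem_sup_span_of_degree_zero (hL : L.IsHomogeneous (homogeneousSubmodule σ K))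
    (hx : x.IsHomogeneous 1) {y : MvPolynomial σ K} (hy : y.IsHomogeneous 0)
    (hyL : y ∈ L ⊔ Ideal.span {x}) : y ∈ L := by
  obtain ⟨l, hl, b, hb, rfl⟩ := Submodule.mem_sup.1 hyL
  obtain ⟨a, rfl⟩ := Ideal.mem_span_singleton'.1 hb
  have hcomp := homogeneousComponent_eq_self hy
  rw [map_add, homogeneousComponent_mul_of_isHomogeneous hx, if_neg Nat.one_pos.not_ge,
    add_zero] at hcomp
  rw [← hcomp]
  exact homogeneousComponent_mem_of_mem hL hl _

lemma gradedPiece_inf_ker_factorₐ (hL : L.IsHomogeneous (homogeneousSubmodule σ K))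
    (hx : x.IsHomogeneous 1) (k : ℕ) :
    gradedPiece L (k + 1) ⊓ LinearMap.ker
      (Ideal.Quotient.factorₐ K (le_sup_left : L ≤ L ⊔ Ideal.span {x})).toLinearMap =
    (gradedPiece L k).map (mulQuot L x) := by
  ext y
  constructor
  · rintro ⟨⟨y, hy, rfl⟩, hyL⟩
    obtain ⟨a, ha, hya⟩ := exists_sub_mul_mem hL hx hy (Ideal.Quotient.eq_zero_iff_mem.1 hyL)
    exact ⟨_, ⟨a, ha, rfl⟩, (Ideal.Quotient.eq.2 hya).symm⟩
  · rintro ⟨_, ⟨a, ha, rfl⟩, rfl⟩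
    refine ⟨⟨a * x, ha.mul hx, rfl⟩, Ideal.Quotient.eq_zero_iff_mem.2 ?_⟩
    exact Ideal.mem_sup_right (Ideal.mem_span_singleton'.2 ⟨a, rfl⟩)

lemma gradedPiece_zero_inf_ker_factorₐ (hL : L.IsHomogeneous (homogeneousSubmodule σ K))
    (hx : x.IsHomogeneous 1) :
    gradedPiece L 0 ⊓ LinearMap.ker
      (Ideal.Quotient.factorₐ K (le_sup_left : L ≤ L ⊔ Ideal.span {x})).toLinearMap = ⊥ := by
  rw [Submodule.eq_bot_iff]
  rintro _ ⟨⟨y, hy, rfl⟩, hyL⟩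
  exact Ideal.Quotient.eq_zero_iff_mem.2 (mem_of_mem_sup_span_of_degree_zero hL hx hy
    (Ideal.Quotient.eq_zero_iff_mem.1 hyL))

variable [Finite σ]

lemma hilbertFunction_succ (hL : L.IsHomogeneous (homogeneousSubmodule σ K))
    (hx : x.IsHomogeneous 1) (k : ℕ) :
    hilbertFunction L (k + 1) = hilbertFunction (L ⊔ Ideal.span {x}) (k + 1) +
      Module.finrank K ((gradedPiece L k).map (mulQuot L x)) := by
  rw [← gradedPiece_inf_ker_factorₐ hL hx, hilbertFunction, hilbertFunction,
    ← map_factorₐ_gradedPiece le_sup_left, finrank_map_add_finrank_inf_ker]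

lemma hilbertFunction_zero (hL : L.IsHomogeneous (homogeneousSubmodule σ K))
    (hx : x.IsHomogeneous 1) :
    hilbertFunction L 0 = hilbertFunction (L ⊔ Ideal.span {x}) 0 := by
  rw [hilbertFunction, hilbertFunction, ← map_factorₐ_gradedPiece le_sup_left,
    ← finrank_map_add_finrank_inf_ker (Ideal.Quotient.factorₐ K
      (le_sup_left : L ≤ L ⊔ Ideal.span {x})).toLinearMap,
    gradedPiece_zero_inf_ker_factorₐ hL hx, finrank_bot, add_zero]

lemma hilbertFunction_le_add_delay {L₁ L₂ : Ideal (MvPolynomial σ K)}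
    (hL : L.IsHomogeneous (homogeneousSubmodule σ K)) (hx : x.IsHomogeneous 1)
    (hL₁ : L₁ ≤ L ⊔ Ideal.span {x}) (hL₂ : ∀ y ∈ L₂, y * x ∈ L) :
    hilbertFunction L ≤ hilbertFunction L₁ + delay (hilbertFunction L₂) := by
  rintro (_ | k)
  · simpa [hilbertFunction_zero hL hx] using hilbertFunction_anti hL₁ 0
  · rw [hilbertFunction_succ hL hx]
    refine add_le_add (hilbertFunction_anti hL₁ _) ?_
    rw [gradedPiece, ← Submodule.map_comp]
    refine finrank_map_le_finrank_map (inf_le_right.trans ?_)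
    rw [ker_mkₐ]
    exact fun y hy => Ideal.Quotient.eq_zero_iff_mem.2 (hL₂ y hy)

lemma hilbertFunction_le_partialSums (hL : L.IsHomogeneous (homogeneousSubmodule σ K))
    (hx : x.IsHomogeneous 1) :
    hilbertFunction L ≤ partialSums (hilbertFunction (L ⊔ Ideal.span {x})) :=
  le_partialSums_of_le_add_delay
    (hilbertFunction_le_add_delay hL hx le_rfl fun _ => L.mul_mem_right x)

lemma mem_of_mul_mem_of_hilbertFunction_eq (hL : L.IsHomogeneous (homogeneousSubmodule σ K))
    (hx : x.IsHomogeneous 1)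
    (h : hilbertFunction L = partialSums (hilbertFunction (L ⊔ Ideal.span {x})))
    {y : MvPolynomial σ K} (hy : y * x ∈ L) : y ∈ L := by
  refine (mem_iff_homogeneousComponent_mem hL y).2 fun k => ?_
  have hk := homogeneousComponent_mem_of_mem hL hy (k + 1)
  rw [homogeneousComponent_mul_of_isHomogeneous hx, if_pos (Nat.le_add_left 1 k),
    Nat.add_sub_cancel] at hk
  have ker_eq_bot : gradedPiece L k ⊓ LinearMap.ker (mulQuot L x) = ⊥ := by
    have hsucc := hilbertFunction_succ hL hx k
    have hrank := finrank_map_add_finrank_inf_ker (mulQuot L x) (gradedPiece L k)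
    rw [h, partialSums_succ, ← h, hilbertFunction] at hsucc
    rw [← Submodule.finrank_eq_zero (R := K)]
    omega
  rw [← Ideal.Quotient.eq_zero_iff_mem, ← Submodule.mem_bot K, ← ker_eq_bot]
  exact ⟨⟨_, homogeneousComponent_isHomogeneous _ _, rfl⟩,
    Ideal.Quotient.eq_zero_iff_mem.2 hk⟩

end LinearForm

/-! ### Families of ideals -/

section Families

open Filter

variable {σ K : Type*} [Field K]

/-- The fibre at `t` of a family of ideals of a polynomial ring over the affine line, the family
being given as an ideal of the polynomial ring in one more variable. -/
noncomputable def fibre (𝓘 : Ideal (Polynomial (MvPolynomial σ K))) (t : K) :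
    Ideal (MvPolynomial σ K) :=
  𝓘.map (Polynomial.evalRingHom (C t))

/-- A family of homogeneous ideals with generators whose degrees do not depend on the parameter. -/
def IsHomogeneousFamily (𝓘 : Ideal (Polynomial (MvPolynomial σ K))) : Prop :=
  ∃ G, 𝓘 = Ideal.span G ∧ ∀ g ∈ G, ∃ e, ∀ t : K, (g.eval (C t)).IsHomogeneous e

lemma fibre_span (G : Set (Polynomial (MvPolynomial σ K))) (t : K) :
    fibre (Ideal.span G) t = Ideal.span ((fun g => g.eval (C t)) '' G) :=
  Ideal.map_span _ G

lemma fibre_span_range {ι : Type*} (g : ι → Polynomial (MvPolynomial σ K)) (t : K) :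
    fibre (Ideal.span (Set.range g)) t = Ideal.span (Set.range fun i => (g i).eval (C t)) := by
  rw [fibre_span, ← Set.range_comp]
  rfl

lemma fibre_span_singleton (g : Polynomial (MvPolynomial σ K)) (t : K) :
    fibre (Ideal.span {g}) t = Ideal.span {g.eval (C t)} := by
  rw [fibre_span, Set.image_singleton]

lemma fibre_sup (𝓘 𝓙 : Ideal (Polynomial (MvPolynomial σ K))) (t : K) :
    fibre (𝓘 ⊔ 𝓙) t = fibre 𝓘 t ⊔ fibre 𝓙 t :=
  Ideal.map_sup _ 𝓘 𝓙

lemma fibre_map_C (I : Ideal (MvPolynomial σ K)) (t : K) : fibre (I.map Polynomial.C) t = I := by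
  rw [fibre, Ideal.map_map, show (Polynomial.evalRingHom (C t)).comp Polynomial.C =
    RingHom.id (MvPolynomial σ K) by ext <;> simp, Ideal.map_id]

lemma IsHomogeneousFamily.sup {𝓘 𝓙 : Ideal (Polynomial (MvPolynomial σ K))}
    (h𝓘 : IsHomogeneousFamily 𝓘) (h𝓙 : IsHomogeneousFamily 𝓙) : IsHomogeneousFamily (𝓘 ⊔ 𝓙) := by
  obtain ⟨G, rfl, hG⟩ := h𝓘
  obtain ⟨G', rfl, hG'⟩ := h𝓙
  exact ⟨G ∪ G', (Ideal.span_union G G').symm, fun g hg => hg.elim (hG g) (hG' g)⟩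

lemma isHomogeneousFamily_span_range {ι : Type*} {g : ι → Polynomial (MvPolynomial σ K)} {e : ℕ}
    (hg : ∀ i (t : K), ((g i).eval (C t)).IsHomogeneous e) :
    IsHomogeneousFamily (Ideal.span (Set.range g)) :=
  ⟨_, rfl, Set.forall_mem_range.2 fun i => ⟨e, hg i⟩⟩

lemma isHomogeneousFamily_span_singleton {g : Polynomial (MvPolynomial σ K)} {e : ℕ}
    (hg : ∀ t : K, (g.eval (C t)).IsHomogeneous e) : IsHomogeneousFamily (Ideal.span {g}) :=
  ⟨_, rfl, by simpa using ⟨e, hg⟩⟩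

lemma isHomogeneousFamily_map_C {I : Ideal (MvPolynomial σ K)}
    (hI : I.IsHomogeneous (homogeneousSubmodule σ K)) :
    IsHomogeneousFamily (I.map Polynomial.C) := by
  obtain ⟨S, rfl⟩ := (Ideal.IsHomogeneous.iff_exists _ _).1 hI
  refine ⟨_, Ideal.map_span _ _, ?_⟩
  rintro _ ⟨_, ⟨⟨_, e, he⟩, -, rfl⟩, rfl⟩
  exact ⟨e, fun t => by simpa using! he⟩

lemma IsHomogeneousFamily.isHomogeneous_fibre {𝓘 : Ideal (Polynomial (MvPolynomial σ K))}
    (h𝓘 : IsHomogeneousFamily 𝓘) (t : K) :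
    (fibre 𝓘 t).IsHomogeneous (homogeneousSubmodule σ K) := by
  obtain ⟨G, rfl, hG⟩ := h𝓘
  rw [fibre_span]
  exact Ideal.homogeneous_span _ _ (Set.forall_mem_image.2 fun g hg => (hG g hg).imp fun _ h => h t)

lemma IsHomogeneousFamily.exists_span_eq {𝓘 : Ideal (Polynomial (MvPolynomial σ K))}
    (h𝓘 : IsHomogeneousFamily 𝓘) (k : ℕ) :
    ∃ B : Set (Polynomial (MvPolynomial σ K)), ∀ t : K,
      homogeneousSubmodule σ K k ⊓ (fibre 𝓘 t).restrictScalars K =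
        Submodule.span K (Set.range fun b : B => b.1.eval (C t)) := by
  obtain ⟨G, rfl, hG⟩ := h𝓘
  choose! e he using hG
  refine ⟨{b | ∃ p : MvPolynomial σ K, ∃ g ∈ G, e g ≤ k ∧ p.IsHomogeneous (k - e g) ∧
    b = Polynomial.C p * g}, fun t => le_antisymm ?_ ?_⟩
  · rintro x ⟨hxk, hx⟩
    rw [fibre_span, Set.image_eq_range] at hx
    refine Submodule.span_mono ?_ (mem_span_homogeneous_multiples
      (fun g : G => he g.1 g.2 t) hxk hx)
    rintro _ ⟨⟨⟨p, g⟩, hgk, hp⟩, rfl⟩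
    exact ⟨⟨_, p, g.1, g.2, hgk, hp, rfl⟩, by simp⟩
  · rw [Submodule.span_le]
    rintro _ ⟨⟨_, p, g, hg, hgk, hp, rfl⟩, rfl⟩
    simp only [Polynomial.eval_mul, Polynomial.eval_C]
    refine ⟨?_, Ideal.mul_mem_left _ _ (Ideal.mem_map_of_mem (Polynomial.evalRingHom (C t))
      (Ideal.subset_span hg))⟩
    simpa [Nat.sub_add_cancel hgk] using! hp.mul (he g hg t)

lemma IsHomogeneousFamily.eventually_hilbertFunction_le [Finite σ]
    {𝓘 : Ideal (Polynomial (MvPolynomial σ K))} (h𝓘 : IsHomogeneousFamily 𝓘) (k : ℕ) (t₀ : K) :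
    ∀ᶠ t in cofinite, hilbertFunction (fibre 𝓘 t) k ≤ hilbertFunction (fibre 𝓘 t₀) k := by
  obtain ⟨B, hB⟩ := h𝓘.exists_span_eq k
  filter_upwards [eventually_finrank_span_eval_le (homogeneousSubmodule σ K k)
    (fun b : B => b.1) (fun b t => (hB t ▸ inf_le_left :
      Submodule.span K (Set.range fun b : B => b.1.eval (C t)) ≤ homogeneousSubmodule σ K k)
      (Submodule.subset_span ⟨b, rfl⟩)) t₀] with t ht
  rw [algebraMap_eq] at ht
  have h₀ := hilbertFunction_add_finrank_inf (fibre 𝓘 t₀) k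
  have h₁ := hilbertFunction_add_finrank_inf (fibre 𝓘 t) k
  rw [hB] at h₀ h₁
  omega

end Families

/-! ### Lefschetz parameters -/

section LefschetzParameters

open Filter

variable {σ K : Type*} [Field K] {d e : ℕ} {h h' : ℕ → ℕ}

/-- The bounds behind the strong Lefschetz property of the quotient by `J` with Lefschetz element
`ω`: its Hilbert function is at most `h`, and the cokernels of the powers `ω ^ (d - 2 * i)` vanish
in degree `d - i - e`. The quotients with symmetric Hilbert function have `e = 0`; those arising
from a cone, whose socle degree is smaller by two, have `e = 1`. -/
structure HasLefschetzBounds (J : Ideal (MvPolynomial σ K)) (ω : MvPolynomial σ K) (d e : ℕ)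
    (h : ℕ → ℕ) : Prop where
  hilbertFunction_le : hilbertFunction J ≤ h
  hilbertFunction_pow_eq_zero : ∀ i, 2 * i ≤ d →
    hilbertFunction (J ⊔ Ideal.span {ω ^ (d - 2 * i)}) (d - i - e) = 0

/-- There are `d` linear forms and a Lefschetz element for the quotient by `I` such that the
quotient by these forms satisfies the Lefschetz bounds. -/
def HasLefschetzParameters (I : Ideal (MvPolynomial σ K)) (d e : ℕ) (h : ℕ → ℕ) : Prop :=
  ∃ (θ : Fin d → MvPolynomial σ K) (ω : MvPolynomial σ K), (∀ a, (θ a).IsHomogeneous 1) ∧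
    ω.IsHomogeneous 1 ∧ HasLefschetzBounds (I ⊔ Ideal.span (Set.range θ)) ω d e h

lemma homogeneousSubmodule_le_map {τ : Type*} {φ : MvPolynomial σ K →ₐ[K] MvPolynomial τ K}
    (hφ : ∀ v, X v ∈ (homogeneousSubmodule σ K 1).map φ.toLinearMap) (k : ℕ) :
    homogeneousSubmodule τ K k ≤ (homogeneousSubmodule σ K k).map φ.toLinearMap := by
  rw [← homogeneousSubmodule_one_pow K k, ← homogeneousSubmodule_one_pow K k, Submodule.map_pow]
  refine pow_le_pow_left₀ bot_le ?_ k
  rw [homogeneousSubmodule_one_eq_span_X, Submodule.span_le]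
  exact Set.range_subset_iff.2 hφ

lemma mul_mem_sup {R : Type*} [CommRing R] {I J : Ideal R} {x : R} (h : ∀ y ∈ I, y * x ∈ J)
    (M : Ideal R) : ∀ y ∈ I ⊔ M, y * x ∈ J ⊔ M := by
  intro y hy
  obtain ⟨a, ha, b, hb, rfl⟩ := Submodule.mem_sup.1 hy
  rw [add_mul]
  exact add_mem (Ideal.mem_sup_left (h a ha)) (Ideal.mem_sup_right (M.mul_mem_right x hb))

variable [Finite σ]

lemma HasLefschetzBounds.mono {J J' : Ideal (MvPolynomial σ K)} {ω : MvPolynomial σ K}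
    (hJ : J ≤ J') (H : HasLefschetzBounds J ω d e h) : HasLefschetzBounds J' ω d e h where
  hilbertFunction_le := (hilbertFunction_anti hJ).trans H.hilbertFunction_le
  hilbertFunction_pow_eq_zero i hi := Nat.le_zero.1 <|
    (hilbertFunction_anti (sup_le_sup_right hJ _) _).trans (H.hilbertFunction_pow_eq_zero i hi).le

lemma HasLefschetzBounds.shift {J : Ideal (MvPolynomial σ K)} {ω : MvPolynomial σ K}
    (hh : h (d + 1) = 0) (H : HasLefschetzBounds J ω d 0 h) :
    HasLefschetzBounds J ω (d + 2) 1 h where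
  hilbertFunction_le := H.hilbertFunction_le
  hilbertFunction_pow_eq_zero
    | 0, _ => Nat.le_zero.1 <| (hilbertFunction_anti le_sup_left _).trans <|
        (H.hilbertFunction_le (d + 1)).trans hh.le
    | i + 1, hi => by
      have hi' := H.hilbertFunction_pow_eq_zero i (by omega)
      rwa [show d + 2 - 2 * (i + 1) = d - 2 * i by omega,
        show d + 2 - (i + 1) - 1 = d - i - 0 by omega]

lemma HasLefschetzBounds.add {L L₁ L₂ : Ideal (MvPolynomial σ K)} {x ω : MvPolynomial σ K}
    (hL : L.IsHomogeneous (homogeneousSubmodule σ K)) (hx : x.IsHomogeneous 1)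
    (hω : ω.IsHomogeneous 1) (hL₁ : L₁ ≤ L ⊔ Ideal.span {x}) (hL₂ : ∀ y ∈ L₂, y * x ∈ L)
    (H₁ : HasLefschetzBounds L₁ ω d 0 h) (H₂ : HasLefschetzBounds L₂ ω d 1 h') :
    HasLefschetzBounds L ω d 0 (h + delay h') where
  hilbertFunction_le := (hilbertFunction_le_add_delay hL hx hL₁ hL₂).trans <|
    add_le_add H₁.hilbertFunction_le (monotone_delay H₂.hilbertFunction_le)
  hilbertFunction_pow_eq_zero i hi := by
    set M := Ideal.span {ω ^ (d - 2 * i)}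
    have hLM : (L ⊔ M).IsHomogeneous (homogeneousSubmodule σ K) :=
      hL.sup (isHomogeneous_span_singleton (hω.pow _))
    have hL₁M : L₁ ⊔ M ≤ L ⊔ M ⊔ Ideal.span {x} :=
      (sup_le_sup_right hL₁ M).trans_eq (sup_right_comm _ _ _)
    have hle := hilbertFunction_le_add_delay hLM hx hL₁M (mul_mem_sup hL₂ M) (d - i)
    have h₁ := H₁.hilbertFunction_pow_eq_zero i hi
    have h₂ : delay (hilbertFunction (L₂ ⊔ M)) (d - i) = 0 := by
      cases hm : d - i with
      | zero => rfl
      | succ m => simpa only [hm] using! H₂.hilbertFunction_pow_eq_zero i hi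
    rw [Pi.add_apply, h₂] at hle
    exact Nat.le_zero.1 (hle.trans h₁.le)

lemma HasLefschetzBounds.eventually_fibre {𝓙 : Ideal (Polynomial (MvPolynomial σ K))}
    {Ω : Polynomial (MvPolynomial σ K)} (h𝓙 : IsHomogeneousFamily 𝓙)
    (hΩ : ∀ t : K, (Ω.eval (C t)).IsHomogeneous 1) (hh : h (d + 1) = 0) {t₀ : K}
    (H : HasLefschetzBounds (fibre 𝓙 t₀) (Ω.eval (C t₀)) d e h) :
    ∀ᶠ t in cofinite, HasLefschetzBounds (fibre 𝓙 t) (Ω.eval (C t)) d e h := by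
  have hHF : ∀ᶠ t in cofinite, ∀ k ∈ Set.Iic (d + 1),
      hilbertFunction (fibre 𝓙 t) k ≤ hilbertFunction (fibre 𝓙 t₀) k :=
    (eventually_all_finite (Set.finite_Iic _)).2 fun k _ => h𝓙.eventually_hilbertFunction_le k t₀
  have hpow : ∀ᶠ t in cofinite, ∀ i ∈ Set.Iic d,
      hilbertFunction (fibre (𝓙 ⊔ Ideal.span {Ω ^ (d - 2 * i)}) t) (d - i - e) ≤
        hilbertFunction (fibre (𝓙 ⊔ Ideal.span {Ω ^ (d - 2 * i)}) t₀) (d - i - e) :=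
    (eventually_all_finite (Set.finite_Iic _)).2 fun i _ =>
      (h𝓙.sup (isHomogeneousFamily_span_singleton (fun t => by
        simpa using (hΩ t).pow (d - 2 * i)))).eventually_hilbertFunction_le _ t₀
  filter_upwards [hHF, hpow] with t htHF htpow
  have hvan : hilbertFunction (fibre 𝓙 t) (d + 1) = 0 :=
    Nat.le_zero.1 ((htHF _ Set.self_mem_Iic).trans ((H.hilbertFunction_le _).trans hh.le))
  refine ⟨fun k => ?_, fun i hi => Nat.le_zero.1 ?_⟩
  · rcases le_or_gt k (d + 1) with hk | hk
    · exact (htHF k hk).trans (H.hilbertFunction_le k)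
    · rw [hilbertFunction_eq_zero_of_le hvan hk.le]
      exact Nat.zero_le _
  · have hi' := htpow i (by rw [Set.mem_Iic]; omega)
    simp only [fibre_sup, fibre_span_singleton, Polynomial.eval_pow] at hi'
    exact hi'.trans (H.hilbertFunction_pow_eq_zero i hi).le

lemma HasLefschetzParameters.cone {I J : Ideal (MvPolynomial σ K)} {x y : MvPolynomial σ K}
    (hx : x.IsHomogeneous 1) (hy : y.IsHomogeneous 1)
    (hIJ : I ≤ J ⊔ Ideal.span {x} ⊔ Ideal.span {y}) (hh : h (d + 1) = 0)
    (H : HasLefschetzParameters I d 0 h) : HasLefschetzParameters J (d + 2) 1 h := by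
  obtain ⟨θ, ω, hθ, hω, H⟩ := H
  refine ⟨Fin.cons x (Fin.cons y θ), ω, Fin.cons hx (Fin.cons hy hθ), hω, (H.mono ?_).shift hh⟩
  rw [Fin.range_cons, Fin.range_cons, Ideal.span_insert, Ideal.span_insert, ← sup_assoc,
    ← sup_assoc]
  exact sup_le_sup_right hIJ _

lemma HasLefschetzParameters.eventually_fibre {𝓘 : Ideal (Polynomial (MvPolynomial σ K))}
    (h𝓘 : IsHomogeneousFamily 𝓘) (hh : h (d + 1) = 0) {t₀ : K}
    (H : HasLefschetzParameters (fibre 𝓘 t₀) d e h) :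
    ∀ᶠ t in cofinite, HasLefschetzParameters (fibre 𝓘 t) d e h := by
  obtain ⟨θ, ω, hθ, hω, H⟩ := H
  have hfibre (t : K) : fibre (𝓘 ⊔ (Ideal.span (Set.range θ)).map Polynomial.C) t =
      fibre 𝓘 t ⊔ Ideal.span (Set.range θ) := by rw [fibre_sup, fibre_map_C]
  filter_upwards [HasLefschetzBounds.eventually_fibre (t₀ := t₀) (Ω := Polynomial.C ω)
    (h𝓘.sup (isHomogeneousFamily_map_C (isHomogeneous_span_range hθ)))
    (fun t => by simpa using hω) hh (by simpa [hfibre] using H)] with t ht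
  exact ⟨θ, ω, hθ, hω, by simpa [hfibre] using ht⟩

/-- The line joining `(θ₀, ω₀)` to `(θ₁, ω₁)` meets the bounds for `I₀` at all but finitely many
points, because it does so at `0`, and those for `I₁`, because it does so at `1`. -/
lemma HasLefschetzParameters.exists_common [Infinite K] {I₀ I₁ : Ideal (MvPolynomial σ K)}
    {e₀ e₁ : ℕ} {h₀ h₁ : ℕ → ℕ} (hI₀ : I₀.IsHomogeneous (homogeneousSubmodule σ K))
    (hI₁ : I₁.IsHomogeneous (homogeneousSubmodule σ K)) (hh₀ : h₀ (d + 1) = 0)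
    (hh₁ : h₁ (d + 1) = 0) (H₀ : HasLefschetzParameters I₀ d e₀ h₀)
    (H₁ : HasLefschetzParameters I₁ d e₁ h₁) :
    ∃ (θ : Fin d → MvPolynomial σ K) (ω : MvPolynomial σ K), (∀ a, (θ a).IsHomogeneous 1) ∧
      ω.IsHomogeneous 1 ∧ HasLefschetzBounds (I₀ ⊔ Ideal.span (Set.range θ)) ω d e₀ h₀ ∧
      HasLefschetzBounds (I₁ ⊔ Ideal.span (Set.range θ)) ω d e₁ h₁ := by
  obtain ⟨θ₀, ω₀, hθ₀, hω₀, H₀⟩ := H₀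
  obtain ⟨θ₁, ω₁, hθ₁, hω₁, H₁⟩ := H₁
  let line (f g : MvPolynomial σ K) : Polynomial (MvPolynomial σ K) :=
    Polynomial.C f + Polynomial.X * Polynomial.C (g - f)
  have line_isHomogeneous {f g : MvPolynomial σ K} (hf : f.IsHomogeneous 1)
      (hg : g.IsHomogeneous 1) (t : K) : ((line f g).eval (C t)).IsHomogeneous 1 := by
    simpa [line] using hf.add ((hg.sub hf).C_mul t)
  let Θ : Ideal (Polynomial (MvPolynomial σ K)) :=
    Ideal.span (Set.range fun a => line (θ₀ a) (θ₁ a))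
  have hΘ : IsHomogeneousFamily Θ :=
    isHomogeneousFamily_span_range fun a => line_isHomogeneous (hθ₀ a) (hθ₁ a)
  have fibre_eq (I : Ideal (MvPolynomial σ K)) (t : K) : fibre (I.map Polynomial.C ⊔ Θ) t =
      I ⊔ Ideal.span (Set.range fun a => (line (θ₀ a) (θ₁ a)).eval (C t)) := by
    rw [fibre_sup, fibre_map_C, fibre_span_range]
  have E₀ := HasLefschetzBounds.eventually_fibre (t₀ := 0) ((isHomogeneousFamily_map_C hI₀).sup hΘ)
    (line_isHomogeneous hω₀ hω₁) hh₀ (by simpa [fibre_eq, line] using H₀)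
  have E₁ := HasLefschetzBounds.eventually_fibre (t₀ := 1) ((isHomogeneousFamily_map_C hI₁).sup hΘ)
    (line_isHomogeneous hω₀ hω₁) hh₁ (by simpa [fibre_eq, line] using H₁)
  simp only [fibre_eq] at E₀ E₁
  obtain ⟨t, ht₀, ht₁⟩ := (E₀.and E₁).exists
  exact ⟨_, _, fun a => line_isHomogeneous (hθ₀ a) (hθ₁ a) t, line_isHomogeneous hω₀ hω₁ t, ht₀,
    ht₁⟩

lemma HasLefschetzParameters.add [Infinite K] {L L₁ L₂ : Ideal (MvPolynomial σ K)}
    {x : MvPolynomial σ K} (hL : L.IsHomogeneous (homogeneousSubmodule σ K))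
    (hL₁ : L₁.IsHomogeneous (homogeneousSubmodule σ K))
    (hL₂ : L₂.IsHomogeneous (homogeneousSubmodule σ K)) (hx : x.IsHomogeneous 1)
    (hL₁x : L₁ ≤ L ⊔ Ideal.span {x}) (hL₂x : ∀ y ∈ L₂, y * x ∈ L) (hh : h (d + 1) = 0)
    (hh' : h' (d + 1) = 0) (H₁ : HasLefschetzParameters L₁ d 0 h)
    (H₂ : HasLefschetzParameters L₂ d 1 h') : HasLefschetzParameters L d 0 (h + delay h') := by
  obtain ⟨θ, ω, hθ, hω, H₁, H₂⟩ := H₁.exists_common hL₁ hL₂ hh hh' H₂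
  have hΘ := isHomogeneous_span_range hθ
  exact ⟨θ, ω, hθ, hω, H₁.add (hL.sup hΘ) hx hω
    ((sup_le_sup_right hL₁x _).trans_eq (sup_right_comm _ _ _)) (mul_mem_sup hL₂x _) H₂⟩

lemma HasLefschetzParameters.of_le_comap {τ : Type*} {L : Ideal (MvPolynomial σ K)}
    {L' : Ideal (MvPolynomial τ K)} (φ : MvPolynomial σ K →ₐ[K] MvPolynomial τ K)
    (hφX : ∀ v, (φ (X v)).IsHomogeneous 1)
    (hφ : ∀ v, X v ∈ (homogeneousSubmodule σ K 1).map φ.toLinearMap) (hL : L ≤ L'.comap φ)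
    (H : HasLefschetzParameters L d e h) : HasLefschetzParameters L' d e h := by
  obtain ⟨θ, ω, hθ, hω, H⟩ := H
  have map_isHomogeneous {p : MvPolynomial σ K} (hp : p.IsHomogeneous 1) :
      (φ p).IsHomogeneous 1 := by
    rw [aeval_unique φ]
    simpa only [mul_one] using hp.aeval (φ ∘ X) hφX
  have hle : L ⊔ Ideal.span (Set.range θ) ≤
      (L' ⊔ Ideal.span (Set.range fun a => φ (θ a))).comap φ := by
    refine sup_le (hL.trans (Ideal.comap_mono le_sup_left)) (Ideal.span_le.2 ?_)
    rintro _ ⟨a, rfl⟩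
    exact Ideal.mem_sup_right (Ideal.subset_span ⟨a, rfl⟩)
  refine ⟨fun a => φ (θ a), φ ω, fun a => map_isHomogeneous (hθ a), map_isHomogeneous hω,
    fun k => (hilbertFunction_le_of_le_comap φ hle (homogeneousSubmodule_le_map hφ k)).trans
      (H.hilbertFunction_le k), fun i hi => Nat.le_zero.1 ?_⟩
  refine (hilbertFunction_le_of_le_comap φ (sup_le (hle.trans (Ideal.comap_mono le_sup_left)) ?_)
    (homogeneousSubmodule_le_map hφ _)).trans (H.hilbertFunction_pow_eq_zero i hi).le
  rw [Ideal.span_singleton_le_iff_mem, Ideal.mem_comap, map_pow]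
  exact Ideal.mem_sup_right (Ideal.mem_span_singleton_self _)

end LefschetzParameters

/-! ### The degeneration attached to an edge contraction -/

section StanleyReisnerIdeal

variable {σ : Type*} (K : Type*) [Field K]

/-- The squarefree monomial with support `F`. -/
noncomputable def squarefreeMonomial (F : Finset σ) : MvPolynomial σ K := ∏ a ∈ F, X a

/-- The Stanley–Reisner ideal of a family of subsets of an arbitrary vertex set `σ`, generated by
the squarefree monomials of its nonmembers. -/
noncomputable def stanleyReisnerIdeal (Γ : Set (Finset σ)) : Ideal (MvPolynomial σ K) :=
  Ideal.span (squarefreeMonomial K '' Γᶜ)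

variable {K}

lemma isHomogeneous_squarefreeMonomial (F : Finset σ) :
    (squarefreeMonomial K F).IsHomogeneous F.card := by
  simpa [squarefreeMonomial] using
    IsHomogeneous.prod F (fun a => (X a : MvPolynomial σ K)) (fun _ => 1)
      fun a _ => isHomogeneous_X K a

lemma isHomogeneous_span_squarefreeMonomial (Γ : Set (Finset σ)) :
    (Ideal.span (squarefreeMonomial K '' Γ)).IsHomogeneous (homogeneousSubmodule σ K) :=
  Ideal.homogeneous_span _ _ (Set.forall_mem_image.2 fun F _ =>
    ⟨F.card, isHomogeneous_squarefreeMonomial F⟩)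

lemma squarefreeMonomial_insert [DecidableEq σ] {v : σ} {F : Finset σ} (hv : v ∉ F) :
    squarefreeMonomial K (insert v F) = X v * squarefreeMonomial K F :=
  Finset.prod_insert hv

lemma squarefreeMonomial_mem {Γ : Set (Finset σ)} {F : Finset σ} (hF : F ∉ Γ) :
    squarefreeMonomial K F ∈ stanleyReisnerIdeal K Γ :=
  Ideal.subset_span ⟨F, hF, rfl⟩

lemma X_mul_squarefreeMonomial_mem [DecidableEq σ] {Γ : Set (Finset σ)} {v : σ} {F : Finset σ}
    (hv : v ∉ F) (hF : insert v F ∉ Γ) :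
    X v * squarefreeMonomial K F ∈ stanleyReisnerIdeal K Γ := by
  rw [← squarefreeMonomial_insert hv]
  exact squarefreeMonomial_mem hF

lemma squarefreeMonomial_mem_span_X {v : σ} {F : Finset σ} (hv : v ∈ F) :
    squarefreeMonomial K F ∈ Ideal.span {(X v : MvPolynomial σ K)} :=
  Ideal.mem_span_singleton.2 (Finset.dvd_prod_of_mem _ hv)

variable (K) in
/-- The Stanley–Reisner ideal of the join of the full simplex on `{i, j}` with `L`. -/
noncomputable def coneIdeal (L : Set (Finset σ)) (i j : σ) :
    Ideal (MvPolynomial σ K) :=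
  Ideal.span (squarefreeMonomial K '' {F | i ∉ F ∧ j ∉ F ∧ F ∉ L})

lemma stanleyReisnerIdeal_le_coneIdeal_sup (L : Set (Finset σ)) (i j : σ) :
    stanleyReisnerIdeal K L ≤ coneIdeal K L i j ⊔ Ideal.span {X i} ⊔ Ideal.span {X j} := by
  refine Ideal.span_le.2 (Set.forall_mem_image.2 fun F hF => ?_)
  by_cases hi : i ∈ F
  · exact Ideal.mem_sup_left (Ideal.mem_sup_right (squarefreeMonomial_mem_span_X hi))
  by_cases hj : j ∈ F
  · exact Ideal.mem_sup_right (squarefreeMonomial_mem_span_X hj)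
  exact Ideal.mem_sup_left (Ideal.mem_sup_left (Ideal.subset_span ⟨F, ⟨hi, hj, hF⟩, rfl⟩))

end StanleyReisnerIdeal

section EdgeContraction

variable {σ K : Type*} [Field K] [DecidableEq σ] {Γ Δ L : Set (Finset σ)} {i j : σ}

/-- `Δ` is the contraction of the vertex `i` of `Γ` to the vertex `j`, the Link condition holds for
`i` and `j`, and `L` is the link of the edge they span. -/
structure IsEdgeContraction (Γ Δ L : Set (Finset σ)) (i j : σ) : Prop where
  ne : i ≠ j
  mem_iff : ∀ F, i ∉ F → j ∉ F → (F ∈ Δ ↔ F ∈ Γ)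
  insert_mem_iff : ∀ F, i ∉ F → j ∉ F → (insert j F ∈ Δ ↔ insert i F ∈ Γ ∨ insert j F ∈ Γ)
  notMem_of_mem : ∀ F ∈ Δ, i ∉ F
  mem_link_iff : ∀ F, F ∈ L ↔ i ∉ F ∧ j ∉ F ∧ insert i (insert j F) ∈ Γ
  link_condition : ∀ F, i ∉ F → j ∉ F → insert i F ∈ Γ → insert j F ∈ Γ → F ∈ L

/-- The generators of the family of ideals degenerating the Stanley–Reisner ideal of `Γ`. For
`t ≠ 0` the pencil `t * x_j - x_i` is a coordinate in place of `x_j`; at `t = 0` it becomes `-x_i`,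
so that the vertex `j` takes over the faces of `i`. -/
inductive DegenerationGenerator (Γ : Set (Finset σ)) (i j : σ) :
    Polynomial (MvPolynomial σ K) → Prop
  | face (F : Finset σ) (hi : i ∉ F) (hj : j ∉ F) (hF : F ∉ Γ) :
      DegenerationGenerator Γ i j (Polynomial.C (squarefreeMonomial K F))
  | right (F : Finset σ) (hi : i ∉ F) (hj : j ∉ F) (hiF : insert i F ∉ Γ) (hjF : insert j F ∉ Γ) :
      DegenerationGenerator Γ i j (Polynomial.C (X j * squarefreeMonomial K F))
  | left (F : Finset σ) (hi : i ∉ F) (hj : j ∉ F) (hiF : insert i F ∉ Γ) :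
      DegenerationGenerator Γ i j (Polynomial.C (X i * squarefreeMonomial K F))
  | pencil (F : Finset σ) (hi : i ∉ F) (hj : j ∉ F) (hjF : insert j F ∉ Γ) :
      DegenerationGenerator Γ i j ((Polynomial.X * Polynomial.C (X j) - Polynomial.C (X i)) *
        Polynomial.C (squarefreeMonomial K F))

/-- The family of ideals degenerating the Stanley–Reisner ideal of `Γ` along the edge `{i, j}`. -/
noncomputable def degeneration (K : Type*) [Field K] (Γ : Set (Finset σ)) (i j : σ) :
    Ideal (Polynomial (MvPolynomial σ K)) :=
  Ideal.span {p | DegenerationGenerator Γ i j p}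

lemma DegenerationGenerator.eval_mem {p : Polynomial (MvPolynomial σ K)}
    (hp : DegenerationGenerator Γ i j p) (t : K) : p.eval (C t) ∈ fibre (degeneration K Γ i j) t :=
  Ideal.mem_map_of_mem (Polynomial.evalRingHom (C t)) (Ideal.subset_span hp)

lemma isHomogeneousFamily_degeneration : IsHomogeneousFamily (degeneration K Γ i j) := by
  refine ⟨_, rfl, ?_⟩
  rintro _ (⟨F⟩ | ⟨F⟩ | ⟨F⟩ | ⟨F⟩)
  all_goals have hF := isHomogeneous_squarefreeMonomial (K := K) F
  · exact ⟨_, fun t => by simpa using hF⟩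
  · exact ⟨_, fun t => by simpa using (isHomogeneous_X K j).mul hF⟩
  · exact ⟨_, fun t => by simpa using (isHomogeneous_X K i).mul hF⟩
  · have hlin (t : K) : (C t * X j - X i : MvPolynomial σ K).IsHomogeneous 1 :=
      ((isHomogeneous_X K j).C_mul t).sub (isHomogeneous_X K i)
    exact ⟨_, fun t => by
      simpa only [Polynomial.eval_mul, Polynomial.eval_sub, Polynomial.eval_X, Polynomial.eval_C]
        using (hlin t).mul hF⟩

lemma IsEdgeContraction.stanleyReisnerIdeal_le_fibre_zero_sup (hΓ : IsEdgeContraction Γ Δ L i j) :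
    stanleyReisnerIdeal K Δ ≤ fibre (degeneration K Γ i j) 0 ⊔ Ideal.span {X i} := by
  refine Ideal.span_le.2 (Set.forall_mem_image.2 fun F hF => ?_)
  by_cases hi : i ∈ F
  · exact Ideal.mem_sup_right (squarefreeMonomial_mem_span_X hi)
  refine Ideal.mem_sup_left ?_
  by_cases hj : j ∈ F
  · have hi' : i ∉ F.erase j := fun h => hi (Finset.mem_of_mem_erase h)
    have hj' : j ∉ F.erase j := Finset.notMem_erase j F
    rw [← Finset.insert_erase hj] at hF ⊢
    rw [Set.mem_compl_iff, hΓ.insert_mem_iff _ hi' hj', not_or] at hF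
    simpa [squarefreeMonomial_insert] using
      (DegenerationGenerator.right (K := K) _ hi' hj' hF.1 hF.2).eval_mem 0
  · rw [Set.mem_compl_iff, hΓ.mem_iff F hi hj] at hF
    simpa using (DegenerationGenerator.face (K := K) _ hi hj hF).eval_mem 0

lemma IsEdgeContraction.mul_X_mem_fibre_zero (hΓ : IsEdgeContraction Γ Δ L i j) :
    ∀ y ∈ coneIdeal K L i j, y * X i ∈ fibre (degeneration K Γ i j) 0 := by
  suffices h : coneIdeal K L i j ≤ Submodule.comap
      (LinearMap.mulRight (MvPolynomial σ K) (X i : MvPolynomial σ K))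
      (fibre (degeneration K Γ i j) 0) from h
  refine Ideal.span_le.2 (Set.forall_mem_image.2 ?_)
  rintro F ⟨hi, hj, hF⟩
  suffices h : X i * squarefreeMonomial K F ∈ fibre (degeneration K Γ i j) 0 by
    simpa [mul_comm] using! h
  by_cases hiF : insert i F ∈ Γ
  · have hjF : insert j F ∉ Γ := fun h => hF (hΓ.link_condition F hi hj hiF h)
    simpa using (DegenerationGenerator.pencil (K := K) F hi hj hjF).eval_mem 0
  · simpa using (DegenerationGenerator.left (K := K) F hi hj hiF).eval_mem 0

/-- The linear change of coordinates sending `t * x_j - x_i` to `x_j`. -/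
noncomputable def shear (i j : σ) (t : K) : MvPolynomial σ K →ₐ[K] MvPolynomial σ K :=
  aeval (Function.update X j (C t⁻¹ * (X j + X i)))

lemma shear_X_self (i j : σ) (t : K) : shear i j t (X j) = C t⁻¹ * (X j + X i) := by
  simp [shear]

lemma shear_X_of_ne {v : σ} (hv : v ≠ j) (t : K) : shear i j t (X v) = X v := by
  simp [shear, hv]

lemma shear_squarefreeMonomial {F : Finset σ} (hj : j ∉ F) (t : K) :
    shear i j t (squarefreeMonomial K F) = squarefreeMonomial K F := by
  rw [squarefreeMonomial, map_prod]
  exact Finset.prod_congr rfl fun a ha => shear_X_of_ne (ne_of_mem_of_not_mem ha hj) t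

lemma shear_pencil (hij : i ≠ j) {t : K} (ht : t ≠ 0) :
    shear i j t (C t * X j - X i) = X j := by
  rw [map_sub, map_mul, shear_X_self, shear_X_of_ne hij, algHom_C, algebraMap_eq, ← mul_assoc,
    ← C_mul, mul_inv_cancel₀ ht, C_1, one_mul, add_sub_cancel_right]

lemma isHomogeneous_shear_X (i j v : σ) (t : K) : (shear i j t (X v)).IsHomogeneous 1 := by
  by_cases hv : v = j
  · rw [hv, shear_X_self]
    exact ((isHomogeneous_X K j).add (isHomogeneous_X K i)).C_mul t⁻¹
  · rw [shear_X_of_ne hv]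
    exact isHomogeneous_X K v

lemma X_mem_map_shear (hij : i ≠ j) {t : K} (ht : t ≠ 0) (v : σ) :
    X v ∈ (homogeneousSubmodule σ K 1).map (shear i j t).toLinearMap := by
  by_cases hv : v = j
  · rw [hv]
    exact ⟨_, ((isHomogeneous_X K j).C_mul t).sub (isHomogeneous_X K i), shear_pencil hij ht⟩
  · exact ⟨_, isHomogeneous_X K v, shear_X_of_ne hv t⟩

lemma fibre_degeneration_le_comap_shear (hij : i ≠ j) {t : K} (ht : t ≠ 0) :
    fibre (degeneration K Γ i j) t ≤ (stanleyReisnerIdeal K Γ).comap (shear i j t) := by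
  rw [degeneration, fibre_span]
  refine Ideal.span_le.2 (Set.forall_mem_image.2 ?_)
  rintro _ (⟨F, hi, hj, hF⟩ | ⟨F, hi, hj, hiF, hjF⟩ | ⟨F, hi, hj, hiF⟩ | ⟨F, hi, hj, hjF⟩)
  all_goals simp only [Polynomial.eval_mul, Polynomial.eval_sub, Polynomial.eval_X,
    Polynomial.eval_C, SetLike.mem_coe, Ideal.mem_comap]
  all_goals try rw [map_mul]
  all_goals rw [shear_squarefreeMonomial hj]
  · exact squarefreeMonomial_mem hF
  · rw [shear_X_self, mul_assoc, add_mul]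
    exact Ideal.mul_mem_left _ _ (add_mem (X_mul_squarefreeMonomial_mem hj hjF)
      (X_mul_squarefreeMonomial_mem hi hiF))
  · rw [shear_X_of_ne hij]
    exact X_mul_squarefreeMonomial_mem hi hiF
  · rw [shear_pencil hij ht]
    exact X_mul_squarefreeMonomial_mem hj hjF

theorem IsEdgeContraction.hasLefschetzParameters [Finite σ] [Infinite K]
    (hΓ : IsEdgeContraction Γ Δ L i j) {d : ℕ} {h h' : ℕ → ℕ} (hh : ∀ k, d + 2 < k → h k = 0)
    (hh' : ∀ k, d < k → h' k = 0)
    (hΔ : HasLefschetzParameters (stanleyReisnerIdeal K Δ) (d + 2) 0 h)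
    (hL : HasLefschetzParameters (stanleyReisnerIdeal K L) d 0 h') :
    HasLefschetzParameters (stanleyReisnerIdeal K Γ) (d + 2) 0 (h + delay h') := by
  have hcone : HasLefschetzParameters (coneIdeal K L i j) (d + 2) 1 h' :=
    hL.cone (isHomogeneous_X K i) (isHomogeneous_X K j)
      (stanleyReisnerIdeal_le_coneIdeal_sup L i j) (hh' _ (by omega))
  have hzero : HasLefschetzParameters (fibre (degeneration K Γ i j) 0) (d + 2) 0 (h + delay h') :=
    hΔ.add (isHomogeneousFamily_degeneration.isHomogeneous_fibre 0)
      (isHomogeneous_span_squarefreeMonomial _) (isHomogeneous_span_squarefreeMonomial _)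
      (isHomogeneous_X K i) hΓ.stanleyReisnerIdeal_le_fibre_zero_sup hΓ.mul_X_mem_fibre_zero
      (hh _ (by omega)) (hh' _ (by omega)) hcone
  obtain ⟨t, ht, ht₀⟩ := ((hzero.eventually_fibre isHomogeneousFamily_degeneration
    (by simp [hh, hh'])).and (Set.finite_singleton (0 : K)).eventually_cofinite_notMem).exists
  exact ht.of_le_comap (shear i j t) (fun v => isHomogeneous_shear_X i j v t)
    (X_mem_map_shear hΓ.ne ht₀) (fibre_degeneration_le_comap_shear hΓ.ne ht₀)

end EdgeContraction

/-! ### Face numbers -/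

section FaceSum

variable {σ M : Type*} [Fintype σ] [AddCommMonoid M] {Γ Δ L : Set (Finset σ)} {i j : σ}

open Classical in
/-- The sum of the weights of the faces of `Γ`, the weight of a face depending on its cardinality.
It specializes to the Euler characteristic and to the Hilbert function of the face ring. -/
noncomputable def faceSum (w : ℕ → M) (Γ : Set (Finset σ)) : M := ∑ F with F ∈ Γ, w F.card

lemma faceSum_singleton_empty (w : ℕ → M) : faceSum w {(∅ : Finset σ)} = w 0 := by
  classical
  simp [faceSum, Finset.filter_eq']

lemma faceSum_subset_ne_add (w : ℕ → M) (V : Finset σ) :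
    faceSum w {F | F ⊆ V ∧ F ≠ V} + w V.card = ∑ F ∈ V.powerset, w F.card := by
  classical
  rw [← Finset.sum_erase_add _ _ (Finset.mem_powerset_self V), faceSum]
  congr 2
  ext F
  simp [and_comm]

variable [DecidableEq σ]

open Classical in
lemma faceSum_eq_sum_sdiff_pair (hij : i ≠ j) (w : ℕ → M) (Γ : Set (Finset σ)) :
    faceSum w Γ = ∑ F ∈ ({i, j}ᶜ : Finset σ).powerset,
      ((if F ∈ Γ then w F.card else 0) + (if insert j F ∈ Γ then w (F.card + 1) else 0) +
        ((if insert i F ∈ Γ then w (F.card + 1) else 0) +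
          (if insert i (insert j F) ∈ Γ then w (F.card + 2) else 0))) := by
  have huniv : (Finset.univ : Finset (Finset σ)) =
      (insert i (insert j ({i, j}ᶜ : Finset σ))).powerset := by
    rw [← Finset.powerset_univ, Finset.insert_eq, Finset.insert_eq j, ← Finset.union_assoc,
      ← Finset.insert_eq, Finset.union_compl]
  rw [faceSum, Finset.sum_filter, huniv, Finset.sum_powerset_insert (by simp [hij]),
    Finset.sum_powerset_insert (by simp), Finset.sum_powerset_insert (by simp),
    ← Finset.sum_add_distrib, ← Finset.sum_add_distrib, ← Finset.sum_add_distrib]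
  refine Finset.sum_congr rfl fun F hF => ?_
  have hF' : i ∉ F ∧ j ∉ F := by
    constructor <;> intro h <;> simpa using Finset.mem_powerset.1 hF h
  have hiF : i ∉ insert j F := by simp [hij, hF'.1]
  rw [Finset.card_insert_of_notMem hiF, Finset.card_insert_of_notMem hF'.1,
    Finset.card_insert_of_notMem hF'.2]

lemma IsEdgeContraction.faceSum_eq (hΓ : IsEdgeContraction Γ Δ L i j) (hdown : IsLowerSet Γ)
    (w : ℕ → M) :
    faceSum w Γ = faceSum w Δ + faceSum (fun a => w (a + 1) + w (a + 2)) L := by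
  classical
  simp only [faceSum_eq_sum_sdiff_pair hΓ.ne, ← Finset.sum_add_distrib]
  refine Finset.sum_congr rfl fun F hF => ?_
  have hiF : i ∉ F := fun h => by simpa using Finset.mem_powerset.1 hF h
  have hjF : j ∉ F := fun h => by simpa using Finset.mem_powerset.1 hF h
  have hL : F ∈ L ↔ insert i F ∈ Γ ∧ insert j F ∈ Γ := by
    refine ⟨fun h => ?_, fun h => hΓ.link_condition F hiF hjF h.1 h.2⟩
    have hijF := ((hΓ.mem_link_iff F).1 h).2.2
    exact ⟨hdown (Finset.insert_subset_insert _ (Finset.subset_insert _ _)) hijF,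
      hdown (Finset.subset_insert _ _) hijF⟩
  have hijF : insert i (insert j F) ∈ Γ ↔ F ∈ L := by simp [hΓ.mem_link_iff, hiF, hjF]
  have hiΔ (G : Finset σ) : insert i G ∉ Δ := fun h => hΓ.notMem_of_mem _ h (by simp)
  have hiL (G : Finset σ) : insert i G ∉ L := fun h => ((hΓ.mem_link_iff _).1 h).1 (by simp)
  have hjL : insert j F ∉ L := fun h => ((hΓ.mem_link_iff _).1 h).2.1 (by simp)
  simp only [hΓ.mem_iff F hiF hjF, hΓ.insert_mem_iff F hiF hjF, hijF, hL, hiΔ, hiL, hjL, if_false,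
    add_zero]
  by_cases hi : insert i F ∈ Γ <;> by_cases hj : insert j F ∈ Γ <;>
    simp only [hi, hj, and_true, and_false, or_true, or_false, if_true, if_false, add_zero]

end FaceSum

section HilbertSeries

/-- The coefficients of `(t / (1 - t)) ^ a`, which count the monomials of each degree whose support
is a given set of `a` variables. -/
def monomialCount (a : ℕ) : ℕ → ℕ := (delay.comp partialSums)^[a] (Pi.single 0 1)

lemma monomialCount_succ (a : ℕ) :
    monomialCount (a + 1) = delay (partialSums (monomialCount a)) :=
  Function.iterate_succ_apply' _ _ _

lemma monomialCount_add_monomialCount_succ (a : ℕ) :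
    monomialCount a + monomialCount (a + 1) = partialSums (monomialCount a) := by
  rw [monomialCount_succ, add_delay_partialSums]

lemma monomialCount_succ_add_monomialCount_succ_succ (a : ℕ) :
    monomialCount (a + 1) + monomialCount (a + 2) =
      delay (partialSums (partialSums (monomialCount a))) := by
  rw [monomialCount_add_monomialCount_succ, monomialCount_succ, partialSums_commute_delay]

lemma eq_delay_partialSums {f g : ℕ → ℕ} (h : g = delay (f + g)) : g = delay (partialSums f) := by
  ext k
  induction k with
  | zero => rw [h, delay_zero, delay_zero]
  | succ k ih =>
    rw [h, delay_succ, delay_succ, Pi.add_apply, ih, ← Pi.add_apply, add_delay_partialSums]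

variable {σ : Type*}

lemma sum_powerset_monomialCount (V : Finset σ) :
    ∑ F ∈ V.powerset, monomialCount F.card = partialSums^[V.card] (Pi.single 0 1) := by
  classical
  induction V using Finset.induction_on with
  | empty => simp [monomialCount]
  | insert v V hv ih =>
    rw [Finset.card_insert_of_notMem hv, Function.iterate_succ_apply', ← ih, map_sum,
      Finset.sum_powerset_insert hv, ← Finset.sum_add_distrib]
    refine Finset.sum_congr rfl fun F hF => ?_
    rw [Finset.card_insert_of_notMem fun h => hv (Finset.mem_powerset.1 hF h),
      monomialCount_add_monomialCount_succ]

variable [DecidableEq σ]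

/-- The exponents of the monomials of degree `k` with support `F`. -/
def exponentsWithSupport (F : Finset σ) (k : ℕ) : Finset (σ →₀ ℕ) :=
  {m ∈ F.finsuppAntidiag k | m.support = F}

lemma mem_exponentsWithSupport {F : Finset σ} {k : ℕ} {m : σ →₀ ℕ} :
    m ∈ exponentsWithSupport F k ↔ m.degree = k ∧ m.support = F := by
  simp only [exponentsWithSupport, Finset.mem_filter, Finset.mem_finsuppAntidiag, and_assoc,
    Finsupp.degree_apply]
  aesop

lemma exponentsWithSupport_insert {v : σ} {F : Finset σ} (hv : v ∉ F) (k : ℕ) :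
    exponentsWithSupport (insert v F) (k + 1) =
      (exponentsWithSupport F k ∪ exponentsWithSupport (insert v F) k).map
        (addRightEmbedding (Finsupp.single v 1)) := by
  ext m
  simp only [Finset.mem_map, Finset.mem_union, mem_exponentsWithSupport, addRightEmbedding_apply,
    ← and_or_left]
  have hsupp (u : σ →₀ ℕ) :
      (u + Finsupp.single v 1).support = insert v F ↔ u.support = F ∨ u.support = insert v F := by
    have hu : (u + Finsupp.single v 1).support = insert v u.support := by
      ext w
      by_cases hw : w = v <;> simp [hw, eq_comm]
    rw [hu]
    by_cases hvu : v ∈ u.support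
    · rw [Finset.insert_eq_of_mem hvu, or_iff_right (ne_of_mem_of_not_mem' hvu hv)]
    · rw [or_iff_left (ne_of_mem_of_not_mem' (Finset.mem_insert_self v F) hvu).symm]
      refine ⟨fun h => ?_, fun h => by rw [h]⟩
      rw [← Finset.erase_insert hvu, h, Finset.erase_insert hv]
  constructor
  · rintro ⟨hm, hF⟩
    have hle : Finsupp.single v 1 ≤ m := by
      rw [Finsupp.single_le_iff, Nat.one_le_iff_ne_zero, ← Finsupp.mem_support_iff, hF]
      exact Finset.mem_insert_self v F
    have hadd := tsub_add_cancel_of_le hle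
    refine ⟨m - Finsupp.single v 1, ⟨?_, (hsupp _).1 (by rw [hadd, hF])⟩, hadd⟩
    rw [← hadd, map_add, Finsupp.degree_single] at hm
    exact Nat.succ_injective hm
  · rintro ⟨m, ⟨rfl, hF⟩, rfl⟩
    exact ⟨by simp, (hsupp m).2 hF⟩

lemma card_exponentsWithSupport (F : Finset σ) :
    (fun k => (exponentsWithSupport F k).card) = monomialCount F.card := by
  induction F using Finset.induction_on with
  | empty =>
    ext k
    by_cases hk : k = 0 <;>
      simp [monomialCount, exponentsWithSupport, Finset.filter_singleton, hk]
  | insert v F hv ih =>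
    rw [Finset.card_insert_of_notMem hv, monomialCount_succ, ← ih]
    refine eq_delay_partialSums (funext ?_)
    rintro (_ | k)
    · simp [exponentsWithSupport, (Finset.insert_nonempty v F).ne_empty.symm]
    · have hdisj : Disjoint (exponentsWithSupport F k) (exponentsWithSupport (insert v F) k) := by
        refine Finset.disjoint_left.2 fun m hm hm' => hv ?_
        rw [← (mem_exponentsWithSupport.1 hm).2, (mem_exponentsWithSupport.1 hm').2]
        exact Finset.mem_insert_self v F
      rw [exponentsWithSupport_insert hv, Finset.card_map, Finset.card_union_of_disjoint hdisj]
      rfl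

/-- The Hilbert function of the face ring of `Γ`. -/
noncomputable def faceHilbert [Fintype σ] (Γ : Set (Finset σ)) : ℕ → ℕ := faceSum monomialCount Γ

lemma IsEdgeContraction.faceHilbert_eq [Fintype σ] {Γ Δ L : Set (Finset σ)} {i j : σ}
    (hΓ : IsEdgeContraction Γ Δ L i j) (hdown : IsLowerSet Γ) :
    faceHilbert Γ = faceHilbert Δ + delay (partialSums (partialSums (faceHilbert L))) := by
  rw [faceHilbert, hΓ.faceSum_eq hdown]
  simp only [faceHilbert, faceSum, monomialCount_succ_add_monomialCount_succ_succ, map_sum]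

end HilbertSeries

/-! ### Purity and the Euler characteristic -/

section Purity

variable {σ : Type*} {Γ Δ L : Set (Finset σ)} {i j : σ} {d e : ℕ}

/-- All maximal members of `Γ` have `d` elements. -/
structure PureOfCard (Γ : Set (Finset σ)) (d : ℕ) : Prop where
  card_le : ∀ F ∈ Γ, F.card ≤ d
  exists_superset : ∀ F ∈ Γ, ∃ G ∈ Γ, F ⊆ G ∧ G.card = d

lemma pureOfCard_singleton_empty : PureOfCard {(∅ : Finset σ)} 0 := by
  constructor <;> simp

lemma pureOfCard_simplexBoundary {V : Finset σ} (hV : V.card = d + 1) :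
    PureOfCard {F | F ⊆ V ∧ F ≠ V} d where
  card_le F hF := by
    have hlt := Finset.card_lt_card (hF.1.ssubset_of_ne hF.2)
    omega
  exists_superset F hF := by
    classical
    obtain ⟨v, hv, hvF⟩ := Finset.exists_of_ssubset (hF.1.ssubset_of_ne hF.2)
    exact ⟨V.erase v, ⟨Finset.erase_subset _ _, (Finset.erase_ssubset hv).ne⟩,
      Finset.subset_erase.2 ⟨hF.1, hvF⟩,
      by rw [Finset.card_erase_of_mem hv, hV, Nat.add_sub_cancel]⟩

section EulerChar

variable [Fintype σ]

/-- The Euler characteristic of `Γ`, up to sign the reduced Euler characteristic: the face `F`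
has weight `(-1) ^ |F|`. -/
noncomputable def eulerChar (Γ : Set (Finset σ)) : ℤ := faceSum (fun a => (-1) ^ a) Γ

lemma eulerChar_singleton_empty : eulerChar {(∅ : Finset σ)} = 1 := by
  rw [eulerChar, faceSum_singleton_empty, pow_zero]

lemma eulerChar_simplexBoundary {V : Finset σ} (hV : V.card = d + 1) :
    eulerChar {F | F ⊆ V ∧ F ≠ V} = (-1) ^ d := by
  have hsum := faceSum_subset_ne_add (fun a => (-1 : ℤ) ^ a) V
  rw [Finset.sum_powerset_neg_one_pow_card_of_nonempty (Finset.card_pos.1 (by omega)), hV,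
    pow_succ] at hsum
  rw [eulerChar]
  linarith

end EulerChar

variable [DecidableEq σ]

lemma IsEdgeContraction.pureOfCard_link (hΓ : IsEdgeContraction Γ Δ L i j) (hedge : ∅ ∈ L)
    (hd : PureOfCard Γ d) (he : PureOfCard L e) : d = e + 2 := by
  have hcard (F : Finset σ) (hi : i ∉ F) (hj : j ∉ F) :
      (insert i (insert j F)).card = F.card + 2 := by
    rw [Finset.card_insert_of_notMem (by simp [hΓ.ne, hi]), Finset.card_insert_of_notMem hj]
  refine le_antisymm ?_ ?_
  · obtain ⟨F, hF, hijF, rfl⟩ := hd.exists_superset _ ((hΓ.mem_link_iff _).1 hedge).2.2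
    have hi : i ∈ F := hijF (by simp)
    have hj : j ∈ F.erase i := Finset.mem_erase.2 ⟨hΓ.ne.symm, hijF (by simp)⟩
    have hF' : insert i (insert j ((F.erase i).erase j)) = F := by
      rw [Finset.insert_erase hj, Finset.insert_erase hi]
    have hle := he.card_le _ ((hΓ.mem_link_iff ((F.erase i).erase j)).2
      ⟨by simp, by simp, by rwa [hF']⟩)
    rw [← hF', hcard _ (by simp) (by simp)]
    exact Nat.add_le_add_right hle 2
  · obtain ⟨F, hF, -, rfl⟩ := he.exists_superset _ hedge
    obtain ⟨hi, hj, hF⟩ := (hΓ.mem_link_iff _).1 hF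
    rw [← hcard F hi hj]
    exact hd.card_le _ hF

/-- The dimension can only drop if all the facets of `Γ` contain `j`. -/
lemma IsEdgeContraction.insert_mem_of_pureOfCard (hΓ : IsEdgeContraction Γ Δ L i j)
    (hdown : IsLowerSet Γ) (hd : PureOfCard Γ d) (he : PureOfCard Δ e) (hne : e < d)
    {F : Finset σ} (hF : F ∈ Δ) (hj : j ∉ F) : insert j F ∈ Δ := by
  have hi : i ∉ F := hΓ.notMem_of_mem _ hF
  obtain ⟨G, hG, hFG, rfl⟩ := hd.exists_superset F ((hΓ.mem_iff F hi hj).1 hF)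
  suffices hjG : j ∈ G from
    (hΓ.insert_mem_iff F hi hj).2 (Or.inr (hdown (Finset.insert_subset hjG hFG) hG))
  by_contra hjG
  refine hne.not_ge ?_
  by_cases hiG : i ∈ G
  · have hmem : insert j (G.erase i) ∈ Δ :=
      (hΓ.insert_mem_iff _ (by simp) (by simp [hjG])).2 (Or.inl (by rwa [Finset.insert_erase hiG]))
    rw [← Finset.card_erase_add_one hiG, ← Finset.card_insert_of_notMem (by simp [hjG] : j ∉ _)]
    exact he.card_le _ hmem
  · exact he.card_le _ ((hΓ.mem_iff G hiG hjG).2 hG)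

lemma IsEdgeContraction.le_of_pureOfCard (hΓ : IsEdgeContraction Γ Δ L i j)
    (hempty : ∅ ∈ Γ) (hd : PureOfCard Γ d) (he : PureOfCard Δ e) : e ≤ d := by
  obtain ⟨G, hG, -, rfl⟩ := he.exists_superset ∅ ((hΓ.mem_iff ∅ (by simp) (by simp)).2 hempty)
  have hi : i ∉ G := hΓ.notMem_of_mem _ hG
  by_cases hj : j ∈ G
  · rw [← Finset.insert_erase hj, hΓ.insert_mem_iff _ (by simp [hi]) (by simp)] at hG
    rw [← Finset.card_erase_add_one hj]
    rcases hG with hG | hG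
    · rw [← Finset.card_insert_of_notMem (by simp [hi] : i ∉ G.erase j)]
      exact hd.card_le _ hG
    · rw [← Finset.card_insert_of_notMem (by simp : j ∉ G.erase j)]
      exact hd.card_le _ hG
  · exact hd.card_le _ ((hΓ.mem_iff G hi hj).1 hG)

variable [Fintype σ]

lemma IsEdgeContraction.eulerChar_eq (hΓ : IsEdgeContraction Γ Δ L i j) (hdown : IsLowerSet Γ) :
    eulerChar Γ = eulerChar Δ := by
  have hcancel (a : ℕ) : (-1 : ℤ) ^ (a + 1) + (-1) ^ (a + 2) = 0 := by ring
  rw [eulerChar, eulerChar, hΓ.faceSum_eq hdown]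
  simp [hcancel, faceSum]

lemma eulerChar_eq_zero_of_insert_mem_iff (hj : ∀ F, insert j F ∈ Γ ↔ F ∈ Γ) :
    eulerChar Γ = 0 := by
  classical
  rw [eulerChar, faceSum, Finset.sum_filter, ← Finset.powerset_univ,
    ← Finset.insert_erase (Finset.mem_univ j), Finset.sum_powerset_insert (by simp),
    ← Finset.sum_add_distrib]
  refine Finset.sum_eq_zero fun F hF => ?_
  have hjF : j ∉ F := fun h => by simpa using Finset.mem_powerset.1 hF h
  rw [Finset.card_insert_of_notMem hjF, pow_succ]
  simp only [hj]
  split_ifs <;> ring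

lemma IsEdgeContraction.pureOfCard_eq (hΓ : IsEdgeContraction Γ Δ L i j) (hdown : IsLowerSet Γ)
    (hdown' : IsLowerSet Δ) (hempty : ∅ ∈ Γ) (hχ : eulerChar Δ ≠ 0) (hd : PureOfCard Γ d)
    (he : PureOfCard Δ e) : d = e := by
  refine le_antisymm (not_lt.1 fun hlt => hχ ?_) (hΓ.le_of_pureOfCard hempty hd he)
  refine eulerChar_eq_zero_of_insert_mem_iff (j := j) fun F =>
    ⟨fun h => hdown' (Finset.subset_insert j F) h, fun hF => ?_⟩
  by_cases hj : j ∈ F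
  · rwa [Finset.insert_eq_of_mem hj]
  · exact hΓ.insert_mem_of_pureOfCard hdown hd he hlt hF hj

end Purity

/-! ### Boundaries of simplices -/

section TruncatedPolynomialRing

variable {σ K : Type*} [Field K] {M : Ideal (MvPolynomial σ K)} {x : MvPolynomial σ K} {d : ℕ}

lemma gradedPiece_le_span_pow (hX : ∀ v, ∃ c : K, X v - c • x ∈ M) (k : ℕ) :
    gradedPiece M k ≤ Submodule.span K {Ideal.Quotient.mk M (x ^ k)} := by
  have hone : gradedPiece M 1 ≤ Submodule.span K {Ideal.Quotient.mk M x} := by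
    rw [gradedPiece, homogeneousSubmodule_one_eq_span_X, Submodule.map_span_le]
    rintro _ ⟨v, rfl⟩
    obtain ⟨c, hc⟩ := hX v
    exact Submodule.mem_span_singleton.2 ⟨c, ((Ideal.Quotient.mk_eq_mk_iff_sub_mem _ _).2 hc).symm⟩
  calc gradedPiece M k = gradedPiece M 1 ^ k := by
        rw [gradedPiece, gradedPiece, ← Submodule.map_pow, homogeneousSubmodule_one_pow]
    _ ≤ Submodule.span K {Ideal.Quotient.mk M x} ^ k := pow_le_pow_left₀ bot_le hone k
    _ = Submodule.span K {Ideal.Quotient.mk M (x ^ k)} := by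
        rw [Submodule.span_pow, Set.singleton_pow, map_pow]

lemma hilbertFunction_le_one (hX : ∀ v, ∃ c : K, X v - c • x ∈ M) (k : ℕ) :
    hilbertFunction M k ≤ 1 :=
  (Submodule.finrank_mono (gradedPiece_le_span_pow hX k)).trans <|
    (finrank_span_le_card _).trans (by simp)

lemma hilbertFunction_eq_zero_of_pow_mem (hX : ∀ v, ∃ c : K, X v - c • x ∈ M) {k : ℕ}
    (hk : x ^ k ∈ M) : hilbertFunction M k = 0 := by
  have hle := gradedPiece_le_span_pow hX k
  rw [Ideal.Quotient.eq_zero_iff_mem.2 hk, Submodule.span_zero_singleton, le_bot_iff] at hle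
  rw [hilbertFunction, hle, finrank_bot]

lemma hasLefschetzBounds_of_pow_mem (hX : ∀ v, ∃ c : K, X v - c • x ∈ M) (hd : x ^ (d + 1) ∈ M) :
    HasLefschetzBounds M x d 0 ((Set.Iic d).indicator 1) where
  hilbertFunction_le k := by
    by_cases hk : k ≤ d
    · simpa [hk] using hilbertFunction_le_one hX k
    · rw [hilbertFunction_eq_zero_of_pow_mem hX (M.pow_mem_of_pow_mem hd (not_le.1 hk))]
      exact Nat.zero_le _
  hilbertFunction_pow_eq_zero i hi := by
    refine hilbertFunction_eq_zero_of_pow_mem (x := x) (fun v => ?_) ?_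
    · obtain ⟨c, hc⟩ := hX v
      exact ⟨c, Ideal.mem_sup_left hc⟩
    · exact Ideal.mem_sup_right (Ideal.mem_span_singleton.2 (pow_dvd_pow x (by omega)))

end TruncatedPolynomialRing

section SimplexBoundary

variable {σ K : Type*} [Field K] {V : Finset σ} {d : ℕ}

lemma X_mem_stanleyReisnerIdeal {Γ : Set (Finset σ)} {v : σ} (hv : {v} ∉ Γ) :
    X v ∈ stanleyReisnerIdeal K Γ := by
  simpa [squarefreeMonomial] using squarefreeMonomial_mem (K := K) hv

lemma hasLefschetzParameters_singleton_empty :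
    HasLefschetzParameters (stanleyReisnerIdeal K {(∅ : Finset σ)}) 0 0
      ((Set.Iic 0).indicator 1) := by
  refine ⟨Fin.elim0, 0, fun a => a.elim0, isHomogeneous_zero _ _ _, ?_⟩
  refine hasLefschetzBounds_of_pow_mem (fun v => ⟨0, Ideal.mem_sup_left ?_⟩) (by simp)
  simpa using X_mem_stanleyReisnerIdeal (by simp)

lemma hasLefschetzParameters_simplexBoundary (hV : V.card = d + 1) :
    HasLefschetzParameters (stanleyReisnerIdeal K {F | F ⊆ V ∧ F ≠ V}) d 0
      ((Set.Iic d).indicator 1) := by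
  classical
  obtain ⟨v₀, hv₀⟩ : V.Nonempty := Finset.card_pos.1 (by omega)
  let e := (V.erase v₀).equivFinOfCardEq (n := d) (by rw [Finset.card_erase_of_mem hv₀]; omega)
  refine ⟨fun a => X (e.symm a : σ) - X v₀, X v₀,
    fun a => (isHomogeneous_X K _).sub (isHomogeneous_X K _), isHomogeneous_X K _, ?_⟩
  set M := stanleyReisnerIdeal K {F | F ⊆ V ∧ F ≠ V} ⊔
    Ideal.span (Set.range fun a => X (e.symm a : σ) - X v₀)
  have hXV (v : σ) (hv : v ∈ V) : X v - X v₀ ∈ M := by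
    by_cases h : v = v₀
    · simp [h]
    · exact Ideal.mem_sup_right (Ideal.subset_span ⟨e ⟨v, Finset.mem_erase.2 ⟨h, hv⟩⟩, by simp⟩)
  refine hasLefschetzBounds_of_pow_mem (fun v => ?_) ?_
  · by_cases hv : v ∈ V
    · exact ⟨1, by simpa using hXV v hv⟩
    · exact ⟨0, Ideal.mem_sup_left (by simpa using X_mem_stanleyReisnerIdeal (by simp [hv]))⟩
  · have hmk : Ideal.Quotient.mk M (squarefreeMonomial K V) =
        Ideal.Quotient.mk M (X v₀ ^ (d + 1)) := by
      rw [squarefreeMonomial, map_prod, map_pow, ← hV, ← Finset.prod_const]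
      exact Finset.prod_congr rfl fun v hv =>
        (Ideal.Quotient.mk_eq_mk_iff_sub_mem _ _).2 (hXV v hv)
    rw [← Ideal.Quotient.eq_zero_iff_mem, ← hmk, Ideal.Quotient.eq_zero_iff_mem]
    exact Ideal.mem_sup_left (squarefreeMonomial_mem (by simp))

lemma partialSums_single_zero_one : partialSums (Pi.single 0 1) = 1 := by
  ext k
  simp [partialSums]

lemma indicator_Iic_add_delay_one (d : ℕ) :
    (Set.Iic d).indicator 1 + delay^[d + 1] 1 = (1 : ℕ → ℕ) := by
  induction d with
  | zero =>
    ext (_ | k) <;> simp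
  | succ d ih =>
    rw [Function.iterate_succ_apply']
    ext (_ | k)
    · simp
    · simpa [Set.indicator_apply] using congrFun ih k

lemma monomialCount_succ_eq_iterate (a : ℕ) :
    monomialCount (a + 1) = partialSums^[a] (delay^[a + 1] 1) := by
  rw [monomialCount, AddMonoidHom.coe_comp, partialSums_commute_delay.symm.comp_iterate,
    ← (partialSums_commute_delay.iterate_iterate (a + 1) (a + 1)).comp_eq, Function.comp_apply,
    Function.iterate_succ_apply, (partialSums_commute_delay.iterate_right (a + 1)).eq,
    partialSums_single_zero_one]

lemma faceHilbert_simplexBoundary [Fintype σ] (hV : V.card = d + 1) :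
    faceHilbert {F | F ⊆ V ∧ F ≠ V} = partialSums^[d] ((Set.Iic d).indicator 1) := by
  have hsum := faceSum_subset_ne_add monomialCount V
  rw [sum_powerset_monomialCount, hV, monomialCount_succ_eq_iterate,
    Function.iterate_succ_apply partialSums, partialSums_single_zero_one] at hsum
  nth_rw 2 [← indicator_Iic_add_delay_one d] at hsum
  rw [iterate_map_add] at hsum
  exact add_right_cancel hsum

end SimplexBoundary

section HilbertFunction

variable {σ K : Type*} [Field K] {Γ : Set (Finset σ)}

lemma coeff_eq_zero_of_mem_stanleyReisnerIdeal (hdown : IsLowerSet Γ) {x : MvPolynomial σ K}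
    (hx : x ∈ stanleyReisnerIdeal K Γ) {m : σ →₀ ℕ} (hm : m.support ∈ Γ) : coeff m x = 0 := by
  classical
  have hmon (F : Finset σ) :
      squarefreeMonomial K F = monomial (∑ a ∈ F, Finsupp.single a 1) 1 :=
    (monomial_sum_one _ _).symm
  have himage : squarefreeMonomial K '' Γᶜ =
      (fun m => monomial m 1) '' ((fun F => ∑ a ∈ F, Finsupp.single a 1) '' Γᶜ) := by
    rw [Set.image_image]
    exact Set.image_congr fun F _ => hmon F
  rw [stanleyReisnerIdeal, himage, mem_ideal_span_monomial_image] at hx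
  by_contra hne
  obtain ⟨_, ⟨F, hF, rfl⟩, hle⟩ := hx m (mem_support_iff.2 hne)
  refine hF (hdown (fun a ha => ?_) hm)
  have hpos := hle a
  simp only [Finsupp.finsetSum_apply, Finsupp.single_apply, Finset.sum_ite_eq', ha, if_true] at hpos
  exact Finsupp.mem_support_iff.2 (by omega)

/-- The monomials supported on faces are linearly independent in the face ring. -/
lemma faceHilbert_le_hilbertFunction [Fintype σ] (hdown : IsLowerSet Γ) :
    faceHilbert Γ ≤ hilbertFunction (stanleyReisnerIdeal K Γ) := by
  classical
  intro k
  let E : Finset (σ →₀ ℕ) := ({F | F ∈ Γ} : Finset (Finset σ)).biUnion (exponentsWithSupport · k)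
  have hE {m : σ →₀ ℕ} (hm : m ∈ E) : m.degree = k ∧ m.support ∈ Γ := by
    obtain ⟨F, hF, hmF⟩ := Finset.mem_biUnion.1 hm
    obtain ⟨hdeg, rfl⟩ := mem_exponentsWithSupport.1 hmF
    exact ⟨hdeg, (Finset.mem_filter.1 hF).2⟩
  have hcard : faceHilbert Γ k = E.card := by
    rw [Finset.card_biUnion, faceHilbert, faceSum, Finset.sum_apply]
    · exact Finset.sum_congr rfl fun F _ => (congrFun (card_exponentsWithSupport F) k).symm
    · refine fun F _ G _ hFG => Finset.disjoint_left.2 fun m hF hG => hFG ?_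
      rw [← (mem_exponentsWithSupport.1 hF).2, (mem_exponentsWithSupport.1 hG).2]
  let v (m : E) : gradedPiece (stanleyReisnerIdeal K Γ) k :=
    ⟨Ideal.Quotient.mk _ (monomial m.1 1), _, isHomogeneous_monomial _ (hE m.2).1, rfl⟩
  have hv : LinearIndependent K v := by
    rw [Fintype.linearIndependent_iff]
    intro g hg m
    have hmem : ∑ i, g i • (monomial i.1 1 : MvPolynomial σ K) ∈ stanleyReisnerIdeal K Γ := by
      rw [← Ideal.Quotient.eq_zero_iff_mem, map_sum]
      exact (Submodule.coe_sum _ _ _).symm.trans (congrArg Subtype.val hg)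
    simpa [coeff_sum, coeff_smul, coeff_monomial, Subtype.val_inj] using
      coeff_eq_zero_of_mem_stanleyReisnerIdeal hdown hmem (hE m.2).2
  rw [hcard, hilbertFunction, ← Fintype.card_coe]
  exact hv.fintype_card_le_finrank

end HilbertFunction

/-! ### Strongly edge decomposable complexes -/

section LefschetzSphere

variable {σ : Type*} [Fintype σ] {Γ Δ L : Set (Finset σ)} {i j : σ} {d e : ℕ} {h h' : ℕ → ℕ}

/-- The properties of a complex with facets of cardinality `d` and `h`-vector `h` which propagate
through edge contractions. The field `faceHilbert_eq` says that `h` is the `h`-vector of `Γ`. -/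
structure IsLefschetzSphere (K : Type*) [Field K] (Γ : Set (Finset σ)) (d : ℕ) (h : ℕ → ℕ) :
    Prop where
  pureOfCard : PureOfCard Γ d
  eulerChar_eq : eulerChar Γ = (-1) ^ d
  h_zero : h 0 = 1
  h_sub : ∀ k ≤ d, h (d - k) = h k
  h_eq_zero : ∀ k, d < k → h k = 0
  faceHilbert_eq : faceHilbert Γ = partialSums^[d] h
  hasLefschetzParameters : HasLefschetzParameters (stanleyReisnerIdeal K Γ) d 0 h

variable {K : Type*} [Field K]

lemma IsLefschetzSphere.nonempty (hΓ : IsLefschetzSphere K Γ d h) : Γ.Nonempty := by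
  rw [Set.nonempty_iff_ne_empty]
  rintro rfl
  have hzero : (-1 : ℤ) ^ d = 0 := by simpa [eulerChar, faceSum] using hΓ.eulerChar_eq.symm
  exact pow_ne_zero d (by norm_num) hzero

lemma isLefschetzSphere_singleton_empty :
    IsLefschetzSphere K {(∅ : Finset σ)} 0 ((Set.Iic 0).indicator 1) where
  pureOfCard := pureOfCard_singleton_empty
  eulerChar_eq := eulerChar_singleton_empty
  h_zero := by simp
  h_sub k hk := by simp [Nat.le_zero.1 hk]
  h_eq_zero k hk := by simp [hk.ne']
  faceHilbert_eq := by
    rw [faceHilbert, faceSum_singleton_empty]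
    ext (_ | k) <;> simp [monomialCount]
  hasLefschetzParameters := hasLefschetzParameters_singleton_empty

lemma isLefschetzSphere_simplexBoundary {V : Finset σ} (hV : V.card = d + 1) :
    IsLefschetzSphere K {F | F ⊆ V ∧ F ≠ V} d ((Set.Iic d).indicator 1) where
  pureOfCard := pureOfCard_simplexBoundary hV
  eulerChar_eq := eulerChar_simplexBoundary hV
  h_zero := by simp
  h_sub k hk := by simp [hk]
  h_eq_zero k hk := by simp [hk]
  faceHilbert_eq := faceHilbert_simplexBoundary hV
  hasLefschetzParameters := hasLefschetzParameters_simplexBoundary hV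

lemma add_delay_sub (hh : ∀ k ≤ d + 2, h (d + 2 - k) = h k) (hh' : ∀ k ≤ d, h' (d - k) = h' k)
    (hh'₀ : ∀ k, d < k → h' k = 0) (k : ℕ) (hk : k ≤ d + 2) :
    (h + delay h') (d + 2 - k) = (h + delay h') k := by
  rw [Pi.add_apply, Pi.add_apply, hh k hk]
  congr 1
  rcases k with _ | k
  · exact hh'₀ (d + 1) d.lt_succ_self
  · rcases Nat.lt_or_ge d k with hdk | hdk
    · rw [delay_succ, hh'₀ k hdk, show d + 2 - (k + 1) = 0 by omega, delay_zero]
    · rw [delay_succ, show d + 2 - (k + 1) = d - k + 1 by omega, delay_succ, hh' k hdk]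

theorem IsEdgeContraction.isLefschetzSphere [DecidableEq σ] [Infinite K]
    (hΓ : IsEdgeContraction Γ Δ L i j)
    (hdown : IsLowerSet Γ) (hdown' : IsLowerSet Δ) (hedge : ∅ ∈ L) (hd : PureOfCard Γ d)
    {e' : ℕ} (hΔ : IsLefschetzSphere K Δ e h) (hL : IsLefschetzSphere K L e' h') :
    IsLefschetzSphere K Γ d (h + delay h') := by
  have hempty : ∅ ∈ Γ := hdown (Finset.empty_subset _) ((hΓ.mem_link_iff _).1 hedge).2.2
  have hχ : eulerChar Δ ≠ 0 := hΔ.eulerChar_eq ▸ pow_ne_zero _ (by norm_num)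
  obtain rfl := hΓ.pureOfCard_eq hdown hdown' hempty hχ hd hΔ.pureOfCard
  obtain rfl := hΓ.pureOfCard_link hedge hd hL.pureOfCard
  exact
    { pureOfCard := hd
      eulerChar_eq := (hΓ.eulerChar_eq hdown).trans hΔ.eulerChar_eq
      h_zero := by rw [Pi.add_apply, hΔ.h_zero, delay_zero]
      h_sub := add_delay_sub hΔ.h_sub hL.h_sub hL.h_eq_zero
      h_eq_zero := by
        rintro (_ | k) hk
        · omega
        · rw [Pi.add_apply, hΔ.h_eq_zero _ hk, delay_succ, hL.h_eq_zero k (by omega)]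
      faceHilbert_eq := by
        rw [hΓ.faceHilbert_eq hdown, hΔ.faceHilbert_eq, hL.faceHilbert_eq, iterate_map_add,
          ← Function.iterate_succ_apply' partialSums, ← Function.iterate_succ_apply' partialSums,
          (partialSums_commute_delay.iterate_left (e' + 2)).eq]
      hasLefschetzParameters :=
        hΓ.hasLefschetzParameters hΔ.h_eq_zero hL.h_eq_zero hΔ.hasLefschetzParameters
          hL.hasLefschetzParameters }

end LefschetzSphere

section Contraction

variable {Γ : Set (Finset ℕ)} {i j : ℕ}

lemma isEdgeContraction_contraction (hdown : IsLowerSet Γ) (hij : i ≠ j)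
    (hlc : LinkCondition Γ i j) :
    IsEdgeContraction Γ (contraction Γ i j) (linkOf Γ {i, j}) i j where
  ne := hij
  mem_iff F hi hj := by
    constructor
    · rintro (hF | ⟨G, -, -, rfl⟩)
      · exact hF.1
      · simp at hj
    · exact fun hF => Or.inl ⟨hF, hi⟩
  insert_mem_iff F hi hj := by
    constructor
    · rintro (hF | ⟨G, hG, hiG, hFG⟩)
      · exact Or.inr hF.1
      · refine Or.inl (hdown (Finset.insert_subset hiG fun w hw => ?_) hG)
        have hw' := hFG ▸ Finset.mem_insert_of_mem (b := j) hw
        have hwj := ne_of_mem_of_not_mem hw hj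
        simp only [Finset.mem_union, Finset.mem_erase, Finset.mem_singleton, hwj, or_false] at hw'
        exact hw'.2
    · rintro (hF | hF)
      · exact Or.inr ⟨_, hF, by simp, by
          rw [Finset.erase_insert hi, Finset.union_comm, ← Finset.insert_eq]⟩
      · exact Or.inl ⟨hF, by simp [hij, hi]⟩
  notMem_of_mem F hF := by
    rcases hF with hF | ⟨G, -, -, rfl⟩
    · exact hF.2
    · simp [hij]
  mem_link_iff F := by
    have hunion : F ∪ {i, j} = insert i (insert j F) := by ext; simp
    simp only [linkOf, Set.mem_ofPred_eq, hunion, Finset.disjoint_insert_right,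
      Finset.disjoint_singleton_right, and_assoc]
  link_condition F hi hj hiF hjF := by
    rw [← hlc]
    exact ⟨⟨by simpa using hi, by rwa [Finset.union_comm, ← Finset.insert_eq]⟩,
      by simpa using hj, by rwa [Finset.union_comm, ← Finset.insert_eq]⟩

lemma isLowerSet_contraction (hdown : IsLowerSet Γ) (hij : i ≠ j) :
    IsLowerSet (contraction Γ i j) := by
  rintro F G hGF (hF | ⟨F, hF, hiF, rfl⟩)
  · exact Or.inl ⟨hdown hGF hF.1, fun hi => hF.2 (hGF hi)⟩
  have hGF' : G.erase j ⊆ F.erase i := by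
    intro w hw
    rw [Finset.mem_erase] at hw
    simpa [hw.1] using hGF hw.2
  have hi : i ∉ G := fun hi => by simpa [hij] using hGF hi
  by_cases hj : j ∈ G
  · refine Or.inr ⟨insert i (G.erase j), hdown (Finset.insert_subset hiF
      (hGF'.trans (Finset.erase_subset _ _))) hF, by simp, ?_⟩
    rw [Finset.erase_insert (by simp [hi]), Finset.union_comm, ← Finset.insert_eq,
      Finset.insert_erase hj]
  · rw [Finset.erase_eq_of_notMem hj] at hGF'
    exact Or.inl ⟨hdown (hGF'.trans (Finset.erase_subset _ _)) hF, hi⟩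

lemma isLowerSet_linkOf (hdown : IsLowerSet Γ) (E : Finset ℕ) : IsLowerSet (linkOf Γ E) :=
  fun _ _ hGF hF => ⟨Finset.disjoint_of_subset_left hGF hF.1,
    hdown (Finset.union_subset_union_left hGF) hF.2⟩

lemma subset_of_mem_contraction {V : Finset ℕ} (hV : ∀ F ∈ Γ, F ⊆ V) (hj : j ∈ V) :
    ∀ F ∈ contraction Γ i j, F ⊆ V := by
  rintro F (hF | ⟨G, hG, -, rfl⟩)
  · exact hV F hF.1
  · exact Finset.union_subset ((Finset.erase_subset _ _).trans (hV G hG)) (by simpa using hj)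

lemma exists_isFacet_superset {V : Finset ℕ} (hV : ∀ F ∈ Γ, F ⊆ V) {F : Finset ℕ} (hF : F ∈ Γ) :
    ∃ G, IsFacet Γ G ∧ F ⊆ G := by
  have hfin : Γ.Finite := V.powerset.finite_toSet.subset fun F hF => by simpa using hV F hF
  obtain ⟨G, hFG, hG⟩ := hfin.exists_le_maximal hF
  exact ⟨G, ⟨hG.prop, fun H hH hGH => hGH.antisymm (hG.le_of_ge hH hGH)⟩, hFG⟩

lemma exists_pureOfCard {V : Finset ℕ} (hV : ∀ F ∈ Γ, F ⊆ V) (hpure : PureComplex Γ)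
    (hne : Γ.Nonempty) : ∃ d, PureOfCard Γ d := by
  obtain ⟨F₀, hF₀⟩ := hne
  obtain ⟨G₀, hG₀, -⟩ := exists_isFacet_superset hV hF₀
  refine ⟨G₀.card, fun F hF => ?_, fun F hF => ?_⟩
  · obtain ⟨G, hG, hFG⟩ := exists_isFacet_superset hV hF
    exact (Finset.card_le_card hFG).trans (hpure _ _ hG hG₀).le
  · obtain ⟨G, hG, hFG⟩ := exists_isFacet_superset hV hF
    exact ⟨G, hG.1, hFG, hpure _ _ hG hG₀⟩

end Contraction

section Pullback

variable {Γ : Set (Finset ℕ)} {n d : ℕ}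

/-- The embedding of the vertex type `Fin n` in the labels `1, …, n`, with the shift by one used in
`faceMonomial`. -/
def vertexEmb (n : ℕ) : Fin n ↪ ℕ where
  toFun a := a + 1
  inj' _ _ h := Fin.ext (Nat.succ_injective h)

/-- The complex `Γ`, as a family of sets of elements of the vertex type `Fin n`. -/
def pullback (n : ℕ) (Γ : Set (Finset ℕ)) : Set (Finset (Fin n)) := {F | F.map (vertexEmb n) ∈ Γ}

lemma map_univ_vertexEmb (n : ℕ) : Finset.univ.map (vertexEmb n) = Finset.Icc 1 n := by
  ext v
  simp only [Finset.mem_map, Finset.mem_univ, true_and, Finset.mem_Icc]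
  constructor
  · rintro ⟨a, rfl⟩
    exact ⟨Nat.le_add_left _ _, a.isLt⟩
  · exact fun hv => ⟨⟨v - 1, by omega⟩, Nat.sub_add_cancel hv.1⟩

lemma exists_map_vertexEmb_eq {F : Finset ℕ} (hF : F ⊆ Finset.Icc 1 n) :
    ∃ G : Finset (Fin n), G.map (vertexEmb n) = F := by
  rw [← map_univ_vertexEmb, Finset.subset_map_iff] at hF
  obtain ⟨G, -, rfl⟩ := hF
  exact ⟨G, rfl⟩

lemma exists_vertexEmb_eq {v : ℕ} (hv : v ∈ Finset.Icc 1 n) : ∃ a, vertexEmb n a = v := by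
  rw [← map_univ_vertexEmb, Finset.mem_map] at hv
  obtain ⟨a, -, ha⟩ := hv
  exact ⟨a, ha⟩

lemma image_map_pullback (hV : ∀ F ∈ Γ, F ⊆ Finset.Icc 1 n) :
    Finset.map (vertexEmb n) '' pullback n Γ = Γ := by
  refine Set.image_preimage_eq_of_subset fun F hF => ?_
  exact exists_map_vertexEmb_eq (hV F hF)

lemma IsEdgeContraction.pullback {Δ L : Set (Finset ℕ)} {a b : Fin n}
    (hΓ : IsEdgeContraction Γ Δ L (vertexEmb n a) (vertexEmb n b)) :
    IsEdgeContraction (pullback n Γ) (pullback n Δ) (pullback n L) a b where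
  ne h := hΓ.ne (by rw [h])
  mem_iff F ha hb := hΓ.mem_iff _ (by simpa using ha) (by simpa using hb)
  insert_mem_iff F ha hb := by
    simpa [EdgeContraction.pullback] using
      hΓ.insert_mem_iff (F.map (vertexEmb n)) (by simpa using ha) (by simpa using hb)
  notMem_of_mem F hF := by simpa using hΓ.notMem_of_mem _ hF
  mem_link_iff F := by
    simpa [EdgeContraction.pullback] using hΓ.mem_link_iff (F.map (vertexEmb n))
  link_condition F ha hb haF hbF := by
    simp only [EdgeContraction.pullback, Set.mem_ofPred_eq, Finset.map_insert] at haF hbF ⊢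
    exact hΓ.link_condition _ (by simpa using ha) (by simpa using hb) haF hbF

lemma isLowerSet_pullback (hdown : IsLowerSet Γ) : IsLowerSet (pullback n Γ) :=
  fun _ _ hGF hF => hdown (Finset.map_subset_map.2 hGF) hF

lemma pureOfCard_pullback_iff (hV : ∀ F ∈ Γ, F ⊆ Finset.Icc 1 n) :
    PureOfCard (pullback n Γ) d ↔ PureOfCard Γ d := by
  conv_rhs => rw [← image_map_pullback hV]
  constructor
  · rintro ⟨hle, hex⟩
    refine ⟨Set.forall_mem_image.2 fun F hF => (Finset.card_map _).trans_le (hle F hF),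
      Set.forall_mem_image.2 fun F hF => ?_⟩
    obtain ⟨G, hG, hFG, hcard⟩ := hex F hF
    exact ⟨_, Set.mem_image_of_mem _ hG, Finset.map_subset_map.2 hFG,
      (Finset.card_map _).trans hcard⟩
  · rintro ⟨hle, hex⟩
    refine ⟨fun F hF => (Finset.card_map _).symm.trans_le (hle _ ⟨F, hF, rfl⟩), fun F hF => ?_⟩
    obtain ⟨_, ⟨G, hG, rfl⟩, hFG, hcard⟩ := hex _ ⟨F, hF, rfl⟩
    exact ⟨G, hG, Finset.map_subset_map.1 hFG, (Finset.card_map _).symm.trans hcard⟩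

lemma stanleyReisnerIdeal_pullback (K : Type*) [Field K] :
    stanleyReisnerIdeal K (pullback n Γ) = srIdeal K n Γ := by
  have hmon (F : Finset (Fin n)) :
      faceMonomial K n (F.map (vertexEmb n)) = squarefreeMonomial K F := by
    rw [faceMonomial, squarefreeMonomial]
    congr 1
    ext a
    rw [Finset.mem_filter_univ]
    exact Finset.mem_map' (vertexEmb n)
  rw [stanleyReisnerIdeal, srIdeal]
  congr 1
  ext f
  constructor
  · rintro ⟨F, hF, rfl⟩
    refine ⟨F.map (vertexEmb n), ?_, hF, (hmon F).symm⟩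
    rw [← map_univ_vertexEmb]
    exact Finset.map_subset_map.2 (Finset.subset_univ F)
  · rintro ⟨F, hF, hFΓ, rfl⟩
    obtain ⟨G, rfl⟩ := exists_map_vertexEmb_eq hF
    exact ⟨G, hFΓ, (hmon G).symm⟩

lemma pullback_singleton_empty : pullback n {∅} = {∅} := by
  ext F
  exact Finset.map_eq_empty

lemma pullback_simplexBoundary (W : Finset (Fin n)) :
    pullback n {F | F ⊆ W.map (vertexEmb n) ∧ F ≠ W.map (vertexEmb n)} =
      {F | F ⊆ W ∧ F ≠ W} := by
  ext F
  exact and_congr Finset.map_subset_map (Finset.map_injective _).ne_iff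

lemma simplexBoundary_singleton (v : ℕ) : {F : Finset ℕ | F ⊆ {v} ∧ F ≠ {v}} = {∅} := by
  ext F
  exact (Finset.ssubset_iff_subset_ne.symm.trans Finset.ssubset_singleton_iff)

lemma exists_isLefschetzSphere_singleton_empty (K : Type*) [Field K] (n : ℕ) :
    ∃ d h, IsLefschetzSphere K (pullback n {∅}) d h :=
  ⟨_, _, pullback_singleton_empty (n := n) ▸ isLefschetzSphere_singleton_empty⟩

lemma exists_isLefschetzSphere_simplexBoundary (K : Type*) [Field K] {V : Finset ℕ}
    (hne : V.Nonempty) (hV : ∀ F ∈ {F | F ⊆ V ∧ F ≠ V}, F ⊆ Finset.Icc 1 n) :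
    ∃ d h, IsLefschetzSphere K (pullback n {F | F ⊆ V ∧ F ≠ V}) d h := by
  rcases (Nat.succ_le_of_lt hne.card_pos).eq_or_lt' with hcard | hcard
  · obtain ⟨v, rfl⟩ := Finset.card_eq_one.1 hcard
    rw [simplexBoundary_singleton]
    exact exists_isLefschetzSphere_singleton_empty K n
  · have hVn : V ⊆ Finset.Icc 1 n := fun v hv => Finset.singleton_subset_iff.1 <|
      hV {v} ⟨Finset.singleton_subset_iff.2 hv, fun h => by simp [← h] at hcard⟩
    obtain ⟨W, rfl⟩ := exists_map_vertexEmb_eq hVn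
    rw [pullback_simplexBoundary]
    rw [Finset.card_map] at hcard
    exact ⟨_, _, isLefschetzSphere_simplexBoundary (Nat.sub_add_cancel hcard.le).symm⟩

theorem exists_isLefschetzSphere (K : Type*) [Field K] [Infinite K]
    (hΓ : StronglyEdgeDecomposable Γ) (hV : ∀ F ∈ Γ, F ⊆ Finset.Icc 1 n) (hdown : IsLowerSet Γ) :
    ∃ d h, IsLefschetzSphere K (pullback n Γ) d h := by
  induction hΓ with
  | trivialComplex => exact exists_isLefschetzSphere_singleton_empty K n
  | simplexBoundary V hne => exact exists_isLefschetzSphere_simplexBoundary K hne hV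
  | contract Γ i j hij hpure hedge hlc _ _ ihΔ ihL =>
    have hi : i ∈ Finset.Icc 1 n := hV _ hedge (by simp)
    have hj : j ∈ Finset.Icc 1 n := hV _ hedge (by simp)
    obtain ⟨d, hd⟩ := exists_pureOfCard hV hpure ⟨_, hedge⟩
    have hdownΔ := isLowerSet_contraction hdown hij.ne
    obtain ⟨e, h, hΔ⟩ := ihΔ (subset_of_mem_contraction hV hj) hdownΔ
    obtain ⟨e', h', hL⟩ := ihL (fun F hF => Finset.subset_union_left.trans (hV _ hF.2))
      (isLowerSet_linkOf hdown _)
    have hcon := isEdgeContraction_contraction hdown hij.ne hlc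
    obtain ⟨a, rfl⟩ := exists_vertexEmb_eq hi
    obtain ⟨b, rfl⟩ := exists_vertexEmb_eq hj
    refine ⟨d, h + delay h', hcon.pullback.isLefschetzSphere (isLowerSet_pullback hdown)
      (isLowerSet_pullback hdownΔ) ?_ ((pureOfCard_pullback_iff hV).2 hd) hΔ hL⟩
    simpa [pullback, linkOf] using hedge

end Pullback

/-! ### Regular sequences and Krull dimension -/

section RegularSequence

variable {σ K : Type*} [Field K] {I : Ideal (MvPolynomial σ K)} {rs : List (MvPolynomial σ K)}

lemma isHomogeneous_sup_ofList (hI : I.IsHomogeneous (homogeneousSubmodule σ K))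
    (hrs : ∀ x ∈ rs, x.IsHomogeneous 1) :
    (I ⊔ Ideal.ofList rs).IsHomogeneous (homogeneousSubmodule σ K) :=
  hI.sup (Ideal.homogeneous_span _ _ fun x hx => ⟨1, hrs x hx⟩)

lemma sup_ofList_take_succ {R : Type*} [CommRing R] (I : Ideal R) {rs : List R} {r : ℕ}
    (hr : r < rs.length) :
    I ⊔ Ideal.ofList (rs.take (r + 1)) = I ⊔ Ideal.ofList (rs.take r) ⊔ Ideal.span {rs[r]} := by
  rw [List.take_succ_eq_append_getElem hr, Ideal.ofList_append, Ideal.ofList_singleton, sup_assoc]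

variable [Finite σ]

lemma iterate_partialSums_hilbertFunction_mono
    (hI : I.IsHomogeneous (homogeneousSubmodule σ K)) (hrs : ∀ x ∈ rs, x.IsHomogeneous 1)
    {r m : ℕ} (hrm : r ≤ m) (hm : m ≤ rs.length) :
    partialSums^[r] (hilbertFunction (I ⊔ Ideal.ofList (rs.take r))) ≤
      partialSums^[m] (hilbertFunction (I ⊔ Ideal.ofList (rs.take m))) := by
  induction m, hrm using Nat.le_induction with
  | base => exact le_rfl
  | succ m _ ih =>
    refine (ih (Nat.le_of_succ_le hm)).trans ?_
    rw [Function.iterate_succ_apply, sup_ofList_take_succ I hm]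
    exact monotone_partialSums.iterate m (hilbertFunction_le_partialSums
      (isHomogeneous_sup_ofList hI fun x hx => hrs x (List.mem_of_mem_take hx))
      (hrs _ (List.getElem_mem _)))

lemma hilbertFunction_le_iterate_partialSums
    (hI : I.IsHomogeneous (homogeneousSubmodule σ K)) (hrs : ∀ x ∈ rs, x.IsHomogeneous 1) :
    hilbertFunction I ≤ partialSums^[rs.length] (hilbertFunction (I ⊔ Ideal.ofList rs)) := by
  simpa [Ideal.ofList_nil] using
    iterate_partialSums_hilbertFunction_mono hI hrs (Nat.zero_le _) le_rfl

lemma mem_of_mul_getElem_mem (hI : I.IsHomogeneous (homogeneousSubmodule σ K))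
    (hrs : ∀ x ∈ rs, x.IsHomogeneous 1)
    (h : partialSums^[rs.length] (hilbertFunction (I ⊔ Ideal.ofList rs)) ≤ hilbertFunction I)
    {r : ℕ} (hr : r < rs.length) {y : MvPolynomial σ K}
    (hy : y * rs[r] ∈ I ⊔ Ideal.ofList (rs.take r)) : y ∈ I ⊔ Ideal.ofList (rs.take r) := by
  have hfirst := iterate_partialSums_hilbertFunction_mono hI hrs (Nat.zero_le r) hr.le
  have hstep := iterate_partialSums_hilbertFunction_mono hI hrs (Nat.le_succ r) hr
  have hlast := iterate_partialSums_hilbertFunction_mono hI hrs hr le_rfl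
  rw [List.take_zero, Ideal.ofList_nil, sup_bot_eq, Function.iterate_zero, id] at hfirst
  rw [List.take_length] at hlast
  have heq := hstep.antisymm (hlast.trans (h.trans hfirst))
  rw [Function.iterate_succ_apply, sup_ofList_take_succ I hr] at heq
  exact mem_of_mul_mem_of_hilbertFunction_eq
    (isHomogeneous_sup_ofList hI fun x hx => hrs x (List.mem_of_mem_take hx))
    (hrs _ (List.getElem_mem _)) (partialSums_injective.iterate r heq) hy

lemma mk_mem_map_mk_iff {R : Type*} [CommRing R] {I J : Ideal R} {y : R} :
    Ideal.Quotient.mk I y ∈ J.map (Ideal.Quotient.mk I) ↔ y ∈ I ⊔ J := by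
  rw [← Ideal.mem_comap, Ideal.comap_map_of_surjective _ Ideal.Quotient.mk_surjective,
    ← RingHom.ker_eq_comap_bot, Ideal.mk_ker, sup_comm]

theorem isRegular_of_hilbertFunction (hI : I.IsHomogeneous (homogeneousSubmodule σ K))
    (hrs : ∀ x ∈ rs, x.IsHomogeneous 1)
    (h : partialSums^[rs.length] (hilbertFunction (I ⊔ Ideal.ofList rs)) ≤ hilbertFunction I)
    (hne : I ⊔ Ideal.ofList rs ≠ ⊤) :
    RingTheory.Sequence.IsRegular (MvPolynomial σ K ⧸ I) (rs.map (Ideal.Quotient.mk I)) where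
  regular_mod_prev r hr := by
    rw [List.length_map] at hr
    rw [isSMulRegular_quotient_iff_mem_of_smul_mem, smul_eq_mul, Ideal.mul_top, ← List.map_take,
      ← Ideal.map_ofList, List.getElem_map]
    intro y hy
    obtain ⟨y, rfl⟩ := Ideal.Quotient.mk_surjective y
    rw [smul_eq_mul, ← map_mul, mk_mem_map_mk_iff, mul_comm] at hy
    exact mk_mem_map_mk_iff.2 (mem_of_mul_getElem_mem hI hrs h hr hy)
  top_ne_smul htop := by
    rw [smul_eq_mul, Ideal.mul_top, ← Ideal.map_ofList] at htop
    refine hne ((Ideal.eq_top_iff_one _).2 (mk_mem_map_mk_iff.1 ?_))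
    rw [← htop]
    exact Submodule.mem_top

end RegularSequence

section KrullDimension

lemma ringKrullDim_le_of_forall_isPrime {A : Type*} [CommRing A] {m : WithBot ℕ∞}
    (h : ∀ p : Ideal A, p.IsPrime → ringKrullDim (A ⧸ p) ≤ m) : ringKrullDim A ≤ m := by
  refine iSup_le fun l => le_trans ?_ (h l.head.asIdeal l.head.isPrime)
  rw [ringKrullDim_quotient]
  let l' : LTSeries (PrimeSpectrum.zeroLocus (R := A) l.head.asIdeal) :=
    { length := l.length
      toFun := fun i => ⟨l i, l.head_le i⟩
      step := fun i => l.step i }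
  exact Order.LTSeries.length_le_krullDim l'

variable {σ K : Type*} [Field K] {Γ : Set (Finset σ)}

lemma ringKrullDim_mvPolynomial_finset (F : Finset σ) :
    ringKrullDim (MvPolynomial F K) = F.card := by
  rw [MvPolynomial.ringKrullDim_of_isNoetherianRing, ringKrullDim_eq_zero_of_field, zero_add,
    Nat.card_eq_fintype_card, Fintype.card_coe]

lemma exists_surjective_aeval_face [Finite σ] {A : Type*} [CommRing A] [IsDomain A] [Algebra K A]
    {g : MvPolynomial σ K →ₐ[K] A} (hg : Function.Surjective g)
    (hΓ : stanleyReisnerIdeal K Γ ≤ RingHom.ker g) :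
    ∃ F ∈ Γ, Function.Surjective (aeval (R := K) fun v : F => g (X v)) := by
  classical
  have := Fintype.ofFinite σ
  refine ⟨Finset.univ.filter fun v => g (X v) ≠ 0, ?_, ?_⟩
  · by_contra hF
    have hzero := hΓ (squarefreeMonomial_mem (K := K) hF)
    rw [RingHom.mem_ker, squarefreeMonomial, map_prod, Finset.prod_eq_zero_iff] at hzero
    obtain ⟨v, hv, hv0⟩ := hzero
    exact (Finset.mem_filter.1 hv).2 hv0
  · rw [← AlgHom.range_eq_top, eq_top_iff, ← (AlgHom.range_eq_top g).2 hg, ← Algebra.map_top,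
      ← adjoin_range_X, AlgHom.map_adjoin, Algebra.adjoin_le_iff, Set.image_subset_iff,
      Set.range_subset_iff]
    intro v
    by_cases hv : g (X v) = 0
    · exact (congrArg (· ∈ AlgHom.range _) hv).mpr (zero_mem _)
    · exact ⟨X ⟨v, by simpa using hv⟩, aeval_X _ _⟩

lemma ringKrullDim_stanleyReisner_le [Finite σ] {d : ℕ} (hd : ∀ F ∈ Γ, F.card ≤ d) :
    ringKrullDim (MvPolynomial σ K ⧸ stanleyReisnerIdeal K Γ) ≤ d := by
  refine ringKrullDim_le_of_forall_isPrime fun p hp => ?_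
  let g := (Ideal.Quotient.mkₐ K p).comp (Ideal.Quotient.mkₐ K (stanleyReisnerIdeal K Γ))
  have hg : Function.Surjective g :=
    (Ideal.Quotient.mkₐ_surjective K p).comp (Ideal.Quotient.mkₐ_surjective K _)
  have hker : stanleyReisnerIdeal K Γ ≤ RingHom.ker g := fun x hx =>
    (congrArg (Ideal.Quotient.mk p) (Ideal.Quotient.eq_zero_iff_mem.2 hx)).trans (map_zero _)
  obtain ⟨F, hF, hsurj⟩ := exists_surjective_aeval_face hg hker
  refine (ringKrullDim_le_of_surjective (aeval fun v : F => g (X v)).toRingHom hsurj).trans ?_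
  rw [ringKrullDim_mvPolynomial_finset]
  exact_mod_cast hd F hF

lemma card_le_ringKrullDim_stanleyReisner (hdown : IsLowerSet Γ) {F : Finset σ} (hF : F ∈ Γ) :
    F.card ≤ ringKrullDim (MvPolynomial σ K ⧸ stanleyReisnerIdeal K Γ) := by
  classical
  let f : MvPolynomial σ K →ₐ[K] MvPolynomial F K :=
    aeval fun v => if h : v ∈ F then X ⟨v, h⟩ else 0
  have hf : stanleyReisnerIdeal K Γ ≤ RingHom.ker f := by
    refine Ideal.span_le.2 (Set.forall_mem_image.2 fun G hG => ?_)
    obtain ⟨v, hv, hvF⟩ := Finset.not_subset.1 fun hGF => hG (hdown hGF hF)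
    rw [SetLike.mem_coe, RingHom.mem_ker, squarefreeMonomial, map_prod]
    exact Finset.prod_eq_zero hv (by simp [f, hvF])
  have hrename (y : MvPolynomial F K) : f (rename (↑) y) = y := by
    rw [aeval_rename]
    convert aeval_X_left_apply y using 2
    ext v
    simp
  rw [← ringKrullDim_mvPolynomial_finset (K := K) F]
  exact ringKrullDim_le_of_surjective (Ideal.Quotient.lift _ f.toRingHom hf)
    (Ideal.Quotient.lift_surjective_of_surjective _ _ fun y => ⟨_, hrename y⟩)

lemma PureOfCard.ringKrullDim_eq [Finite σ] {d : ℕ} (hd : PureOfCard Γ d) (hdown : IsLowerSet Γ)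
    (hne : Γ.Nonempty) :
    ringKrullDim (MvPolynomial σ K ⧸ stanleyReisnerIdeal K Γ) = d := by
  obtain ⟨F, hF⟩ := hne
  obtain ⟨G, hG, -, rfl⟩ := hd.exists_superset F hF
  exact (ringKrullDim_stanleyReisner_le hd.card_le).antisymm
    (card_le_ringKrullDim_stanleyReisner hdown hG)

lemma ringKrullDim_le_zero_of_hilbertFunction_eq_zero [Finite σ] {L : Ideal (MvPolynomial σ K)}
    {m : ℕ} (h : hilbertFunction L m = 0) : ringKrullDim (MvPolynomial σ K ⧸ L) ≤ 0 := by
  have htop : ⨆ k : Fin m, gradedPiece L k = ⊤ := by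
    rw [eq_top_iff]
    rintro x -
    obtain ⟨x, rfl⟩ := Ideal.Quotient.mk_surjective x
    rw [← sum_homogeneousComponent x, map_sum]
    refine Submodule.sum_mem _ fun k _ => ?_
    have hcomp := homogeneousComponent_isHomogeneous k x
    rcases Nat.lt_or_ge k m with hk | hk
    · exact Submodule.mem_iSup_of_mem ⟨k, hk⟩ ⟨_, hcomp, rfl⟩
    · have hvanish := hilbertFunction_eq_zero_iff.1 (hilbertFunction_eq_zero_of_le h hk)
      rw [Ideal.Quotient.eq_zero_iff_mem.2 (hvanish hcomp)]
      exact zero_mem _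
  have : Module.Finite K (MvPolynomial σ K ⧸ L) := by
    rw [Module.finite_def, ← htop]
    exact Submodule.fg_iSup _ fun k => Module.Finite.iff_fg.1 inferInstance
  have : IsArtinianRing (MvPolynomial σ K ⧸ L) := IsArtinianRing.of_finite K _
  exact_mod_cast Ring.krullDimLE_iff.1 (isArtinianRing_iff_krullDimLE_zero.1 this)

end KrullDimension

/-! ### The strong Lefschetz property -/

section StrongLefschetz

variable {σ K : Type*} [Field K]

lemma bijOn_of_map_eq_of_finrank_eq {V W : Type*} [AddCommGroup V] [Module K V] [AddCommGroup W]
    [Module K W] {f : V →ₗ[K] W} {p : Submodule K V} {q : Submodule K W} [FiniteDimensional K p]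
    (hmap : p.map f = q) (hrank : Module.finrank K q = Module.finrank K p) : Set.BijOn f p q := by
  have hker : p ⊓ LinearMap.ker f = ⊥ := by
    have hsum := finrank_map_add_finrank_inf_ker f p
    have := Submodule.finiteDimensional_of_le (inf_le_left : p ⊓ LinearMap.ker f ≤ p)
    rw [← Submodule.finrank_eq_zero (R := K)]
    rw [hmap] at hsum
    omega
  have hinj : Set.InjOn f p :=
    LinearMap.injOn_of_disjoint_ker le_rfl (disjoint_iff.2 hker)
  have himage : f '' p = q := congrArg SetLike.coe hmap
  exact himage ▸ hinj.bijOn_image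

variable [Finite σ] {L : Ideal (MvPolynomial σ K)} {g : MvPolynomial σ K} {e k : ℕ}

lemma map_mulQuot_gradedPiece (hL : L.IsHomogeneous (homogeneousSubmodule σ K))
    (hg : g.IsHomogeneous e) (hcoker : hilbertFunction (L ⊔ Ideal.span {g}) (k + e) = 0) :
    (gradedPiece L k).map (mulQuot L g) = gradedPiece L (k + e) := by
  refine le_antisymm ?_ ?_
  · rintro _ ⟨_, ⟨a, ha, rfl⟩, rfl⟩
    exact ⟨a * g, IsHomogeneous.mul ha hg, rfl⟩
  · rintro _ ⟨y, hy, rfl⟩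
    obtain ⟨a, ha, hya⟩ := exists_sub_mul_mem hL hg hy (hilbertFunction_eq_zero_iff.1 hcoker hy)
    exact ⟨_, ⟨a, ha, rfl⟩, (Ideal.Quotient.eq.2 hya).symm⟩

lemma bijOn_gradedPiece (hL : L.IsHomogeneous (homogeneousSubmodule σ K))
    (hg : g.IsHomogeneous e) (hcoker : hilbertFunction (L ⊔ Ideal.span {g}) (k + e) = 0)
    (hdim : hilbertFunction L (k + e) = hilbertFunction L k) :
    Set.BijOn (fun x => Ideal.Quotient.mk L g * x) (gradedPiece L k) (gradedPiece L (k + e)) := by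
  have hcomm : ⇑(mulQuot L g) = fun x => Ideal.Quotient.mk L g * x := funext fun x => mul_comm _ _
  exact hcomm ▸ bijOn_of_map_eq_of_finrank_eq (map_mulQuot_gradedPiece hL hg hcoker) hdim

end StrongLefschetz

section GradedQuotient

variable {K : Type*} [Field K] {n d : ℕ} {I : Ideal (MvPolynomial (Fin n) K)}
  {θ : Fin d → MvPolynomial (Fin n) K} {h : ℕ → ℕ}

lemma ofList_ofFn {R : Type*} [CommRing R] (θ : Fin d → R) :
    Ideal.ofList (List.ofFn θ) = Ideal.span (Set.range θ) :=
  congrArg Ideal.span (Set.ext fun x => List.mem_ofFn' θ x)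

lemma hilbertFunction_sup_span_range_eq (hI : I.IsHomogeneous (homogeneousSubmodule (Fin n) K))
    (hθ : ∀ a, (θ a).IsHomogeneous 1)
    (hle : hilbertFunction (I ⊔ Ideal.span (Set.range θ)) ≤ h)
    (hge : partialSums^[d] h ≤ hilbertFunction I) :
    hilbertFunction (I ⊔ Ideal.span (Set.range θ)) = h := by
  have hmono := hilbertFunction_le_iterate_partialSums (rs := List.ofFn θ) hI
    (List.forall_mem_ofFn_iff.2 hθ)
  rw [List.length_ofFn, ofList_ofFn] at hmono
  exact partialSums_injective.iterate d
    ((monotone_partialSums.iterate d hle).antisymm (hge.trans hmono))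

lemma isCMIdeal_of_hilbertFunction (hI : I.IsHomogeneous (homogeneousSubmodule (Fin n) K))
    (hdim : ringKrullDim (MvPolynomial (Fin n) K ⧸ I) = d) (hθ : IsLSOP I d θ)
    (h : partialSums^[d] (hilbertFunction (I ⊔ Ideal.span (Set.range θ))) ≤ hilbertFunction I)
    (hne : I ⊔ Ideal.span (Set.range θ) ≠ ⊤) : IsCMIdeal I := by
  refine ⟨d, hdim, θ, hθ, isRegular_of_hilbertFunction hI (List.forall_mem_ofFn_iff.2 hθ.1) ?_ ?_⟩
  · rwa [List.length_ofFn, ofList_ofFn]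
  · rwa [ofList_ofFn]

theorem hasSLPIdeal_of_hasLefschetzParameters
    (hI : I.IsHomogeneous (homogeneousSubmodule (Fin n) K))
    (hdim : ringKrullDim (MvPolynomial (Fin n) K ⧸ I) = d)
    (hge : partialSums^[d] h ≤ hilbertFunction I) (hd : h d ≠ 0)
    (h_sub : ∀ k ≤ d, h (d - k) = h k) (h_eq_zero : ∀ k, d < k → h k = 0)
    (H : HasLefschetzParameters I d 0 h) : HasSLPIdeal I := by
  obtain ⟨θ, ω, hθ, hω, hle, hpow⟩ := H
  have hJ := hilbertFunction_sup_span_range_eq hI hθ hle hge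
  have hbot (k : ℕ) : gradedPiece (I ⊔ Ideal.span (Set.range θ)) k = ⊥ ↔ h k = 0 := by
    rw [← congrFun hJ, hilbertFunction, Submodule.finrank_eq_zero]
  have hne : I ⊔ Ideal.span (Set.range θ) ≠ ⊤ := fun htop =>
    hd ((hbot d).1 (gradedPiece_eq_bot_iff.2 fun _ _ => htop ▸ Submodule.mem_top))
  have hlsop : IsLSOP I d θ := ⟨hθ, ringKrullDim_le_zero_of_hilbertFunction_eq_zero
    ((congrFun hJ (d + 1)).trans (h_eq_zero _ d.lt_succ_self))⟩
  refine ⟨isCMIdeal_of_hilbertFunction hI hdim hlsop (hJ ▸ hge) hne, d, hdim, θ, hlsop, ω, hω, d,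
    ⟨fun hbot' => hd ((hbot d).1 hbot'), fun k hk => (hbot k).2 (h_eq_zero k hk)⟩,
    fun i hi => ?_⟩
  have hadd : d - i = i + (d - 2 * i) := by omega
  have hcoker := hpow i hi
  have hsymm := h_sub i (by omega)
  rw [Nat.sub_zero, hadd] at hcoker
  rw [hadd, ← congrFun hJ, ← congrFun hJ] at hsymm
  simp only [hadd, ← map_pow]
  exact bijOn_gradedPiece (hI.sup (isHomogeneous_span_range hθ))
    (by simpa only [one_mul] using hω.pow (d - 2 * i)) hcoker hsymm

theorem IsLefschetzSphere.hasSLPIdeal {Γ : Set (Finset (Fin n))} (hΓ : IsLefschetzSphere K Γ d h)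
    (hdown : IsLowerSet Γ) : HasSLPIdeal (stanleyReisnerIdeal K Γ) := by
  have hd : h d ≠ 0 := by
    rw [← Nat.sub_zero d, hΓ.h_sub 0 d.zero_le, hΓ.h_zero]
    exact one_ne_zero
  exact hasSLPIdeal_of_hasLefschetzParameters (isHomogeneous_span_squarefreeMonomial Γᶜ)
    (hΓ.pureOfCard.ringKrullDim_eq hdown hΓ.nonempty)
    (hΓ.faceHilbert_eq ▸ faceHilbert_le_hilbertFunction hdown) hd hΓ.h_sub hΓ.h_eq_zero
    hΓ.hasLefschetzParameters

end GradedQuotient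

section FaceNumbers

variable {Γ : Set (Finset ℕ)} {n d : ℕ}

open Classical in
lemma fvec_eq_card_filter (hV : ∀ F ∈ Γ, F ⊆ Finset.Icc 1 n) (j : ℕ) :
    fvec Γ j = (Finset.univ.filter fun F => F ∈ pullback n Γ ∧ F.card = j).card := by
  have himage : {F | F ∈ Γ ∧ F.card = j} =
      Finset.map (vertexEmb n) '' {F | F ∈ pullback n Γ ∧ F.card = j} := by
    ext F
    constructor
    · rintro ⟨hF, hj⟩
      obtain ⟨G, rfl⟩ := exists_map_vertexEmb_eq (hV F hF)
      exact ⟨G, ⟨hF, (Finset.card_map _).symm.trans hj⟩, rfl⟩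
    · rintro ⟨G, ⟨hG, hj⟩, rfl⟩
      exact ⟨hG, (Finset.card_map _).trans hj⟩
  rw [fvec, himage, Set.ncard_image_of_injective _ (Finset.map_injective _),
    ← Set.ncard_coe_finset, Finset.coe_filter_univ]

lemma eulerChar_pullback (hV : ∀ F ∈ Γ, F ⊆ Finset.Icc 1 n)
    (hd : ∀ F ∈ pullback n Γ, F.card ≤ d) :
    eulerChar (pullback n Γ) = ∑ j ∈ Finset.range (d + 1), (-1) ^ j * (fvec Γ j : ℤ) := by
  classical
  rw [eulerChar, faceSum, ← Finset.sum_fiberwise_of_maps_to (g := Finset.card)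
    (t := Finset.range (d + 1)) fun F hF =>
      Finset.mem_range.2 (Nat.lt_succ_of_le (hd F (Finset.mem_filter.1 hF).2))]
  refine Finset.sum_congr rfl fun j _ => ?_
  rw [Finset.sum_congr rfl fun F hF => by rw [(Finset.mem_filter.1 hF).2], Finset.sum_const,
    Finset.filter_filter, ← fvec_eq_card_filter hV, nsmul_eq_mul, mul_comm]

lemma hvec_self (hV : ∀ F ∈ Γ, F ⊆ Finset.Icc 1 n) (hd : ∀ F ∈ pullback n Γ, F.card ≤ d) :
    hvec d Γ d = (-1) ^ d * eulerChar (pullback n Γ) := by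
  rw [eulerChar_pullback hV hd, hvec, Finset.mul_sum]
  refine Finset.sum_congr rfl fun j hj => ?_
  have hsign : (-1 : ℤ) ^ (d - j) = (-1) ^ d * (-1) ^ j := by
    obtain ⟨k, rfl⟩ := Nat.exists_eq_add_of_le (Nat.lt_succ_iff.1 (Finset.mem_range.1 hj))
    rw [Nat.add_sub_cancel_left, pow_add, mul_right_comm, ← mul_pow, neg_one_mul, neg_neg,
      one_pow, one_mul]
  rw [hsign, Nat.sub_self, Nat.choose_zero_right, Nat.cast_one, mul_one, mul_assoc]

lemma PureOfCard.sdim_eq (h : PureOfCard Γ d) (hne : Γ.Nonempty) : sdim Γ = (d : ℤ) - 1 := by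
  obtain ⟨F, hF⟩ := hne
  obtain ⟨G, hG, -, hcard⟩ := h.exists_superset F hF
  refine IsGreatest.csSup_eq ⟨⟨G, hG, by simp only [hcard]⟩, ?_⟩
  rintro _ ⟨F, hF, rfl⟩
  exact sub_le_sub_right (Int.ofNat_le.2 (h.card_le F hF)) 1

end FaceNumbers

end EdgeContraction

/-- Corollary 3.4 / 4.7. Strongly edge decomposable complexes are
Cohen–Macaulay and have the strong Lefschetz property over any infinite field. -/
theorem stmt10 (K : Type) [Field K] (hK : Infinite K) (n d : ℕ) (Γ : Set (Finset ℕ))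
    (hΓ : SimplicialComplexOn (Finset.Icc 1 n) Γ)
    (hdim : sdim Γ = (d : ℤ) - 1)
    (hsed : StronglyEdgeDecomposable Γ) :
    ComplexCM K n Γ ∧ ComplexSLP K n d Γ := by
  obtain ⟨hV, -, hdown⟩ := hΓ
  have hlower : IsLowerSet Γ := fun F G hGF hF => hdown F hF G hGF
  obtain ⟨e, h, hsphere⟩ := EdgeContraction.exists_isLefschetzSphere K hsed hV hlower
  have hpure : EdgeContraction.PureOfCard Γ e :=
    (EdgeContraction.pureOfCard_pullback_iff hV).1 hsphere.pureOfCard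
  have hne : Γ.Nonempty := let ⟨_, hF⟩ := hsphere.nonempty; ⟨_, hF⟩
  obtain rfl : e = d := by have := hpure.sdim_eq hne; omega
  have hslp : HasSLPIdeal (srIdeal K n Γ) := EdgeContraction.stanleyReisnerIdeal_pullback K ▸
    hsphere.hasSLPIdeal (EdgeContraction.isLowerSet_pullback hlower)
  have hh : hvec e Γ e = 1 := by
    rw [EdgeContraction.hvec_self hV hsphere.pureOfCard.card_le, hsphere.eulerChar_eq, ← mul_pow,
      neg_mul_neg, one_mul, one_pow]
  exact ⟨hslp.1, hh ▸ one_pos, hslp⟩
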